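/- arXiv:2312.03778 — 5 statements merged into one kernel-verified Lean document; each statement's English description precedes it below -/
import Mathlib

section
/- Let 1 ≤ q ≤ 2, let H₁,…,H_k be m×n complex matrices with H₁*H₁ + ⋯ + H_k*H_k = I_n, and let B₁,…,B_k be m×m positive definite matrices. Then Tr[exp_q(Σ_{j=1}^k H_j* B_j H_j)] ≤ Tr[Σ_{j=1}^k H_j* exp_q(B_j) H_j]. -/
open Matrix ComplexOrder

/-- Matrix logarithm of a (positive definite) Hermitian matrix, via functional calculus. -/
noncomputable def mlog {n : ℕ} (A : Matrix (Fin n) (Fin n) ℂ) : Matrix (Fin n) (Fin n) ℂ :=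
  cfc Real.log A

/-- Matrix exponential of a Hermitian matrix, via functional calculus. -/
noncomputable def mexp {n : ℕ} (A : Matrix (Fin n) (Fin n) ℂ) : Matrix (Fin n) (Fin n) ℂ :=
  cfc Real.exp A

/-- Real power of a (positive definite) Hermitian matrix, via functional calculus. -/
noncomputable def mpow {n : ℕ} (A : Matrix (Fin n) (Fin n) ℂ) (p : ℝ) : Matrix (Fin n) (Fin n) ℂ :=
  cfc (fun x : ℝ => x ^ p) A

/-- Deformed logarithm `log_q x = (x^(q-1) - 1)/(q-1)`. -/
noncomputable def logq (q x : ℝ) : ℝ := (x ^ (q - 1) - 1) / (q - 1)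

/-- Deformed exponential `exp_q x = (1 + (q-1)x)^(1/(q-1))`, with `exp_1 = exp`. -/
noncomputable def expq (q x : ℝ) : ℝ :=
  if q = 1 then Real.exp x else (1 + (q - 1) * x) ^ (1 / (q - 1))

/-- Deformed logarithm of a positive definite matrix, via functional calculus. -/
noncomputable def mlogq {n : ℕ} (q : ℝ) (A : Matrix (Fin n) (Fin n) ℂ) :
    Matrix (Fin n) (Fin n) ℂ :=
  cfc (logq q) A

/-- Deformed exponential of a Hermitian matrix, via functional calculus. -/
noncomputable def mexpq {m : ℕ} (q : ℝ) (A : Matrix (Fin m) (Fin m) ℂ) :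
    Matrix (Fin m) (Fin m) ℂ :=
  cfc (expq q) A

/-- Real part of the trace. -/
noncomputable def trRe {n : ℕ} (M : Matrix (Fin n) (Fin n) ℂ) : ℝ := (Matrix.trace M).re

/-- The reduced relative entropy `S_H(A | B) = Tr[A log A - H* A H log B - A + B]`. -/
noncomputable def SH {n : ℕ} (H A B : Matrix (Fin n) (Fin n) ℂ) : ℝ :=
  trRe (A * mlog A - Hᴴ * A * H * mlog B - A + B)

/-- The reduced Tsallis relative entropy
`S_{H,q}(A | B) = Tr[A^(2-q) log_q A - H* A^(2-q) H log_q B - A + B]`. -/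
noncomputable def STq {n : ℕ} (H : Matrix (Fin n) (Fin n) ℂ) (q : ℝ)
    (A B : Matrix (Fin n) (Fin n) ℂ) : ℝ :=
  trRe (mpow A (2 - q) * mlogq q A - Hᴴ * mpow A (2 - q) * H * mlogq q B - A + B)

/-!
Of `f = expq q` only its convexity on the half-line where `1 + (q - 1) x > 0` matters. Let `u` run
over an orthonormal eigenbasis of `A = ∑ j, (H j)ᴴ * B j * H j`. The eigenvalue of `A` at `u` is
`∑ j, ⟨H j u, B j (H j u)⟩`, which is an average of the eigenvalues of the `B j`: the weights are
the squared moduli of the coordinates of `H j u` in an eigenbasis of `B j`, and they add up to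
`∑ j, ‖H j u‖² = ‖u‖² = 1`. The scalar Jensen inequality bounds `f` of this eigenvalue by
`⟨u, (∑ j, (H j)ᴴ * f (B j) * H j) u⟩`, and summing over `u` gives the two traces.
-/

section Convexity

theorem convexOn_rpow_of_nonpos {p : ℝ} (hp : p ≤ 0) :
    ConvexOn ℝ (Set.Ioi 0) fun x : ℝ => x ^ p := by
  have hlog : ConvexOn ℝ (Set.Ioi 0) fun x : ℝ => p * Real.log x := by
    simpa using strictConcaveOn_log_Ioi.concaveOn.neg.smul (neg_nonneg.mpr hp)
  have hlog_cont : ContinuousOn (fun x : ℝ => p * Real.log x) (Set.Ioi 0) :=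
    continuousOn_const.mul (Real.continuousOn_log.mono fun x hx => ne_of_gt hx)
  have himage : Convex ℝ ((fun x : ℝ => p * Real.log x) '' Set.Ioi 0) :=
    (isPreconnected_Ioi.image _ hlog_cont).ordConnected.convex
  have hexp : ConvexOn ℝ (Set.Ioi 0) (Real.exp ∘ fun x : ℝ => p * Real.log x) :=
    (convexOn_exp.subset (Set.subset_univ _) himage).comp hlog (Real.exp_monotone.monotoneOn _)
  exact hexp.congr fun x hx => by
    rw [Function.comp_apply, Real.rpow_def_of_pos hx, mul_comm]

theorem expq_one : expq 1 = Real.exp :=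
  funext fun _ => if_pos rfl

theorem expq_of_ne_one {q : ℝ} (hq : q ≠ 1) :
    expq q = fun x => (1 + (q - 1) * x) ^ (1 / (q - 1)) :=
  funext fun _ => if_neg hq

theorem convexOn_expq {q : ℝ} (hq : q ≤ 2) :
    ConvexOn ℝ {x | 0 < 1 + (q - 1) * x} (expq q) := by
  obtain rfl | hq1 := eq_or_ne q 1
  · simpa [expq_one] using convexOn_exp
  have hpow : ConvexOn ℝ (Set.Ioi 0) fun y : ℝ => y ^ (1 / (q - 1)) := by
    obtain hlt | hgt := hq1.lt_or_gt
    · exact convexOn_rpow_of_nonpos (one_div_nonpos.mpr (sub_nonpos.mpr hlt.le))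
    · have hexponent : 1 ≤ 1 / (q - 1) := one_le_one_div (sub_pos.mpr hgt) (by linarith)
      exact (convexOn_rpow hexponent).subset Set.Ioi_subset_Ici_self (convex_Ioi 0)
  have hline (x : ℝ) : AffineMap.lineMap 1 q x = 1 + (q - 1) * x := by
    rw [AffineMap.lineMap_apply_ring']; ring
  simpa only [expq_of_ne_one hq1, Function.comp_def, Set.preimage, Set.mem_Ioi, hline] using
    hpow.comp_affineMap (AffineMap.lineMap 1 q)

end Convexity

section MatrixJensen

variable {ι n 𝕜 : Type*} {m : ι → Type*} [RCLike 𝕜] [Fintype n]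

theorem trace_eq_sum_star_dotProduct_mulVec [Fintype ι]
    (b : OrthonormalBasis ι 𝕜 (EuclideanSpace 𝕜 n)) (X : Matrix n n 𝕜) :
    trace X = ∑ i, star ⇑(b i) ⬝ᵥ X *ᵥ b i := by
  classical
  rw [← trace_toLin_eq X (EuclideanSpace.basisFun n 𝕜).toBasis,
    ← toEuclideanLin_eq_toLin_orthonormal, LinearMap.trace_eq_sum_inner _ b]
  refine Finset.sum_congr rfl fun i _ => ?_
  rw [EuclideanSpace.inner_eq_star_dotProduct, dotProduct_comm]
  rfl

theorem star_dotProduct_sum_conjTranspose_mul_mul_mulVec [Fintype ι] [∀ j, Fintype (m j)]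
    (H : ∀ j, Matrix (m j) n 𝕜) (B : ∀ j, Matrix (m j) (m j) 𝕜) (u : n → 𝕜) :
    star u ⬝ᵥ (∑ j, (H j)ᴴ * B j * H j) *ᵥ u = ∑ j, star (H j *ᵥ u) ⬝ᵥ B j *ᵥ (H j *ᵥ u) := by
  simp only [sum_mulVec, dotProduct_sum, star_mulVec, ← mulVec_mulVec, dotProduct_mulVec,
    vecMul_vecMul]

variable [DecidableEq n]

open scoped MatrixOrder in
theorem nonneg_of_mem_spectrum_of_posSemidef {A : Matrix n n 𝕜} (hA : A.PosSemidef) {x : ℝ}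
    (hx : x ∈ spectrum ℝ A) : 0 ≤ x :=
  spectrum_nonneg_of_nonneg hA.nonneg hx

theorem cfc_eq_mul_diagonal_mul_conjTranspose {A : Matrix n n 𝕜} (hA : A.IsHermitian)
    (f : ℝ → ℝ) :
    cfc f A = (hA.eigenvectorUnitary : Matrix n n 𝕜) *
      diagonal (fun i => (f (hA.eigenvalues i) : 𝕜)) *
        (hA.eigenvectorUnitary : Matrix n n 𝕜)ᴴ := by
  rw [hA.cfc_eq, IsHermitian.cfc, Unitary.conjStarAlgAut_apply]
  rfl

theorem trace_cfc {A : Matrix n n 𝕜} (hA : A.IsHermitian) (f : ℝ → ℝ) :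
    trace (cfc f A) = ∑ i, (f (hA.eigenvalues i) : 𝕜) := by
  rw [cfc_eq_mul_diagonal_mul_conjTranspose hA, trace_mul_comm, ← Matrix.mul_assoc,
    ← star_eq_conjTranspose, Unitary.coe_star_mul_self, Matrix.one_mul, trace_diagonal]

theorem star_dotProduct_cfc_mulVec {A : Matrix n n 𝕜} (hA : A.IsHermitian) (f : ℝ → ℝ)
    (x : n → 𝕜) :
    star x ⬝ᵥ cfc f A *ᵥ x =
      ((∑ l, ‖((hA.eigenvectorUnitary : Matrix n n 𝕜)ᴴ *ᵥ x) l‖ ^ 2 * f (hA.eigenvalues l) : ℝ) :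
        𝕜) := by
  set U : Matrix n n 𝕜 := (hA.eigenvectorUnitary : Matrix n n 𝕜) with hU
  calc star x ⬝ᵥ cfc f A *ᵥ x
      = star (Uᴴ *ᵥ x) ⬝ᵥ diagonal (fun l => (f (hA.eigenvalues l) : 𝕜)) *ᵥ (Uᴴ *ᵥ x) := by
        simp only [cfc_eq_mul_diagonal_mul_conjTranspose hA, ← hU, star_mulVec,
          conjTranspose_conjTranspose, dotProduct_mulVec, vecMul_vecMul]
    _ = ∑ l, (‖(Uᴴ *ᵥ x) l‖ : 𝕜) ^ 2 * (f (hA.eigenvalues l) : 𝕜) := by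
        refine Finset.sum_congr rfl fun l _ => ?_
        rw [mulVec_diagonal, Pi.star_apply, RCLike.star_def, mul_left_comm, RCLike.conj_mul,
          mul_comm]
    _ = ((∑ l, ‖(Uᴴ *ᵥ x) l‖ ^ 2 * f (hA.eigenvalues l) : ℝ) : 𝕜) := by
        push_cast
        rfl

variable [Fintype ι] [∀ j, Fintype (m j)] [∀ j, DecidableEq (m j)] {s : Set ℝ} {f : ℝ → ℝ}
  {B : ∀ j, Matrix (m j) (m j) 𝕜}

theorem map_re_sum_star_dotProduct_mulVec_le (hf : ConvexOn ℝ s f)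
    (hB : ∀ j, (B j).IsHermitian) (hs : ∀ j, spectrum ℝ (B j) ⊆ s)
    {x : ∀ j, m j → 𝕜} (hx : ∑ j, star (x j) ⬝ᵥ x j = 1) :
    f (RCLike.re (∑ j, star (x j) ⬝ᵥ B j *ᵥ x j)) ≤
      RCLike.re (∑ j, star (x j) ⬝ᵥ cfc f (B j) *ᵥ x j) := by
  let w (p : Σ j, m j) : ℝ :=
    ‖(((hB p.1).eigenvectorUnitary : Matrix (m p.1) (m p.1) 𝕜)ᴴ *ᵥ x p.1) p.2‖ ^ 2
  let ev (p : Σ j, m j) : ℝ := (hB p.1).eigenvalues p.2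
  have hspectral (g : ℝ → ℝ) :
      RCLike.re (∑ j, star (x j) ⬝ᵥ cfc g (B j) *ᵥ x j) = ∑ p, w p * g (ev p) := by
    simp only [star_dotProduct_cfc_mulVec (hB _), ← RCLike.ofReal_sum, RCLike.ofReal_re,
      Fintype.sum_sigma, w, ev]
  have hsum : ∑ p, w p = 1 := by
    have hone (j : ι) : cfc (fun _ : ℝ => (1 : ℝ)) (B j) = 1 := cfc_const_one ℝ (B j) (hB j)
    simpa [hone, hx] using (hspectral fun _ => 1).symm
  have hmean : RCLike.re (∑ j, star (x j) ⬝ᵥ B j *ᵥ x j) = ∑ p, w p * ev p := by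
    have hid (j : ι) : cfc (fun t : ℝ => t) (B j) = B j := cfc_id' ℝ (B j) (hB j)
    simpa only [hid] using hspectral fun t => t
  rw [hmean, hspectral f]
  exact hf.map_sum_le (fun p _ => sq_nonneg _) hsum
    fun p _ => hs p.1 ((hB p.1).eigenvalues_mem_spectrum_real p.2)

theorem re_trace_cfc_sum_conjTranspose_mul_mul_le (hf : ConvexOn ℝ s f)
    {H : ∀ j, Matrix (m j) n 𝕜} (hH : ∑ j, (H j)ᴴ * H j = 1)
    (hB : ∀ j, (B j).IsHermitian) (hs : ∀ j, spectrum ℝ (B j) ⊆ s) :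
    RCLike.re (trace (cfc f (∑ j, (H j)ᴴ * B j * H j))) ≤
      RCLike.re (trace (∑ j, (H j)ᴴ * cfc f (B j) * H j)) := by
  have hA : (∑ j, (H j)ᴴ * B j * H j).IsHermitian :=
    isSelfAdjoint_sum _ fun j _ => isHermitian_conjTranspose_mul_mul _ (hB j)
  let u (i : n) : n → 𝕜 := hA.eigenvectorBasis i
  have hunit (i : n) : ∑ j, star (H j *ᵥ u i) ⬝ᵥ (H j *ᵥ u i) = 1 := by
    have hnorm : star (u i) ⬝ᵥ u i = 1 := by
      rw [dotProduct_comm, ← EuclideanSpace.inner_eq_star_dotProduct,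
        inner_self_eq_norm_sq_to_K, hA.eigenvectorBasis.norm_eq_one]
      simp
    simpa [hH, hnorm] using
      (star_dotProduct_sum_conjTranspose_mul_mul_mulVec H (fun j => (1 : Matrix (m j) (m j) 𝕜))
        (u i)).symm
  calc RCLike.re (trace (cfc f (∑ j, (H j)ᴴ * B j * H j)))
      = ∑ i, f (hA.eigenvalues i) := by
        rw [trace_cfc hA, ← RCLike.ofReal_sum, RCLike.ofReal_re]
    _ = ∑ i, f (RCLike.re (∑ j, star (H j *ᵥ u i) ⬝ᵥ B j *ᵥ (H j *ᵥ u i))) := by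
        simp only [hA.eigenvalues_eq, star_dotProduct_sum_conjTranspose_mul_mul_mulVec, u]
    _ ≤ ∑ i, RCLike.re (∑ j, star (H j *ᵥ u i) ⬝ᵥ cfc f (B j) *ᵥ (H j *ᵥ u i)) :=
        Finset.sum_le_sum fun i _ =>
          map_re_sum_star_dotProduct_mulVec_le hf hB hs (hunit i)
    _ = RCLike.re (trace (∑ j, (H j)ᴴ * cfc f (B j) * H j)) := by
        simp only [trace_eq_sum_star_dotProduct_mulVec hA.eigenvectorBasis, map_sum,
          star_dotProduct_sum_conjTranspose_mul_mul_mulVec, u]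

theorem stmt12_general {q : ℝ} (hq : q ≤ 2) {H : ∀ j, Matrix (m j) n 𝕜}
    (hH : ∑ j, (H j)ᴴ * H j = 1) (hB : ∀ j, (B j).IsHermitian)
    (hspec : ∀ j, ∀ x ∈ spectrum ℝ (B j), 0 < 1 + (q - 1) * x) :
    RCLike.re (trace (cfc (expq q) (∑ j, (H j)ᴴ * B j * H j))) ≤
      RCLike.re (trace (∑ j, (H j)ᴴ * cfc (expq q) (B j) * H j)) :=
  re_trace_cfc_sum_conjTranspose_mul_mul_le (convexOn_expq hq) hH hB hspec

end MatrixJensen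

/-- Jensen type trace inequality for the deformed exponential, 1 ≤ q ≤ 2. -/
theorem stmt12 {m n k : ℕ} (q : ℝ) (hq : q ∈ Set.Icc (1 : ℝ) 2)
    (H : Fin k → Matrix (Fin m) (Fin n) ℂ)
    (hH : ∑ j, (H j)ᴴ * H j = 1)
    (B : Fin k → Matrix (Fin m) (Fin m) ℂ) (hB : ∀ j, (B j).PosDef) :
    trRe (mexpq q (∑ j, (H j)ᴴ * B j * H j)) ≤ trRe (∑ j, (H j)ᴴ * mexpq q (B j) * H j) :=
  stmt12_general hq.2 hH (fun j => (hB j).isHermitian) fun j _ hx =>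
    add_pos_of_pos_of_nonneg one_pos <| mul_nonneg (sub_nonneg.mpr hq.1) <|
      nonneg_of_mem_spectrum_of_posSemidef (hB j).posSemidef hx
end

section
/- Let X, Y, Z be n×n Hermitian complex matrices with X Z = Z X, and let f be a continuously differentiable real function defined on an open interval containing all eigenvalues of X. Then the function t ↦ Tr[f(X + tY) Z] is differentiable at t = 0 with derivative Tr[Y f'(X) Z], where f(X+tY) and f'(X) are defined via the functional calculus for Hermitian matrices. -/
open Matrix ComplexOrder

/-!
Interpolate `f` and `deriv f` on the finite spectrum of `X` by a polynomial `q`. For `q` the formula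
is algebra: the product rule produces terms `Xⁱ * Y * Xʲ`, and cyclicity of the trace together with
`X * Z = Z * X` moves all powers of `X` to the right of `Y`. The remainder `f - q` vanishes to first
order on the spectrum of `X`, and the spectrum of a perturbation of `X` stays within the norm of the
perturbation, so the functional calculus of `f - q` has derivative zero at `X`.
-/

open Polynomial Topology

theorem exists_polynomial_eval_eq_and_eval_derivative_eq {K : Type*} [Field K] (s : Finset K)
    (u v : K → K) :
    ∃ p : K[X], ∀ x ∈ s, p.eval x = u x ∧ (derivative p).eval x = v x := by
  classical
  have hinj : Set.InjOn (id : K → K) s := Function.injective_id.injOn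
  set q := Lagrange.nodal s (id : K → K)
  set p := Lagrange.interpolate s id u
  set r := Lagrange.interpolate s id
    fun x => (v x - (derivative p).eval x) / (derivative q).eval x
  refine ⟨p + q * r, fun x hx => ?_⟩
  have hp : p.eval x = u x := Lagrange.eval_interpolate_at_node u hinj hx
  have hr : r.eval x = (v x - (derivative p).eval x) / (derivative q).eval x :=
    Lagrange.eval_interpolate_at_node _ hinj hx
  have hq : q.eval x = 0 := Lagrange.eval_nodal_at_node (v := (id : K → K)) hx
  have hq' : (derivative q).eval x ≠ 0 := by
    have hweight := Lagrange.nodalWeight_ne_zero hinj hx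
    rw [Lagrange.nodalWeight_eq_eval_derivative_nodal hx] at hweight
    exact fun h0 => hweight (inv_eq_zero.mpr h0)
  exact ⟨by simp [hp, hq], by simp [derivative_mul, hq, hr, mul_div_cancel₀ _ hq']⟩

section SpectralPerturbation

variable {𝕜 A : Type*} [RCLike 𝕜] [NormedRing A] [StarRing A] [NormedAlgebra 𝕜 A]
  [HasSummableGeomSeries A] {p : A → Prop} [IsometricContinuousFunctionalCalculus 𝕜 A p]

theorem exists_mem_spectrum_norm_sub_le {a b : A} (ha : p a) {μ : 𝕜} (hμ : μ ∈ spectrum 𝕜 b) :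
    ∃ l ∈ spectrum 𝕜 a, ‖μ - l‖ ≤ ‖b - a‖ := by
  by_cases hμa : μ ∈ spectrum 𝕜 a
  · exact ⟨μ, hμa, by simp⟩
  have : Nontrivial A := by
    by_contra! hA
    simp [spectrum.of_subsingleton] at hμ
  have hne : ∀ l ∈ spectrum 𝕜 a, μ - l ≠ 0 := fun l hl h => hμa (sub_eq_zero.mp h ▸ hl)
  let r : Aˣ := cfcUnits (fun l => μ - l) a hne
  have hr : (r : A) = algebraMap 𝕜 A μ - a := by
    change cfc (fun l => μ - l) a = _
    rw [cfc_sub (fun _ => μ) (fun l => l) a, cfc_const μ a, cfc_id' 𝕜 a]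
  -- `l` is a point of the spectrum of `a` closest to `μ`: it attains the norm of the resolvent.
  obtain ⟨⟨l, hl, hnorm⟩, -⟩ := IsGreatest.norm_cfc (fun l => (μ - l)⁻¹) a
    (by fun_prop (disch := assumption))
  have hrinv : ‖((r⁻¹ : Aˣ) : A)‖⁻¹ = ‖μ - l‖ := by
    change ‖cfc (fun l => (μ - l)⁻¹) a‖⁻¹ = _
    simp only [← hnorm, norm_inv, inv_inv]
  refine ⟨l, hl, ?_⟩
  by_contra! hlt
  refine hμ (r.ofNearby (algebraMap 𝕜 A μ - b) ?_).isUnit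
  rwa [hr, hrinv, sub_sub_sub_cancel_left, norm_sub_rev]

theorem hasFDerivAt_cfc_zero_of_hasDerivAt_zero {a : A} (ha : p a)
    (hfin : (spectrum 𝕜 a).Finite) {g : 𝕜 → 𝕜} (hg : ∀ l ∈ spectrum 𝕜 a, g l = 0)
    (hg' : ∀ l ∈ spectrum 𝕜 a, HasDerivAt g 0 l) :
    HasFDerivAt (cfc g) (0 : A →L[𝕜] A) a := by
  have hzero : cfc g a = 0 := (cfc_congr hg).trans (cfc_zero 𝕜 a)
  rw [hasFDerivAt_iff_isLittleO, Asymptotics.isLittleO_iff]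
  intro ε hε
  have hlocal : ∀ l ∈ spectrum 𝕜 a,
      ∀ᶠ r in 𝓝 (0 : ℝ), ∀ m, ‖m - l‖ ≤ r → ‖g m‖ ≤ ε * ‖m - l‖ := by
    intro l hl
    have hsmall := (hg' l hl).isLittleO.def hε
    obtain ⟨ρ, hρ, hball⟩ := Metric.eventually_nhds_iff.mp hsmall
    filter_upwards [Iio_mem_nhds hρ] with r hr m hm
    simpa [hg l hl] using hball (y := m) (by rw [dist_eq_norm]; exact hm.trans_lt hr)
  have hnorm : Filter.Tendsto (fun b : A => ‖b - a‖) (𝓝 a) (𝓝 0) := tendsto_norm_sub_self a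
  filter_upwards [hnorm.eventually ((Filter.eventually_all_finite hfin).mpr hlocal)] with b hb
  simp only [hzero, sub_zero, _root_.zero_apply]
  refine norm_cfc_le (by positivity) fun m hm => ?_
  obtain ⟨l, hl, hml⟩ := exists_mem_spectrum_norm_sub_le ha hm
  calc ‖g m‖ ≤ ε * ‖m - l‖ := hb l hl m hml
    _ ≤ ε * ‖b - a‖ := by gcongr

end SpectralPerturbation

theorem tracial_sum_pow_mul_mul_pow_mul {R M G : Type*} [Semiring R] [AddCommMonoid M]
    [FunLike G R M] [AddMonoidHomClass G R M] {τ : G} (hτ : ∀ a b, τ (a * b) = τ (b * a))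
    {a z : R} (haz : Commute a z) (b : R) (k : ℕ) :
    τ ((∑ i ∈ Finset.range k, a ^ (k - 1 - i) * b * a ^ i) * z) =
      k • τ (b * a ^ (k - 1) * z) := by
  rw [Finset.sum_mul, map_sum, Finset.sum_congr rfl, Finset.sum_const, Finset.card_range]
  intro i hi
  have hik : i + (k - 1 - i) = k - 1 := by
    have := Finset.mem_range.mp hi
    omega
  calc τ (a ^ (k - 1 - i) * b * a ^ i * z)
      = τ (b * a ^ i * (z * a ^ (k - 1 - i))) := by
        rw [mul_assoc, mul_assoc, hτ]; simp only [mul_assoc]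
    _ = τ (b * a ^ (k - 1) * z) := by
        rw [← (haz.pow_left _).eq, mul_assoc b, ← mul_assoc (a ^ i), ← pow_add, hik,
          ← mul_assoc]

theorem hasDerivAt_tracial_aeval_mul {𝕜 A F : Type*} [NontriviallyNormedField 𝕜] [NormedRing A]
    [NormedAlgebra 𝕜 A] [NormedAddCommGroup F] [NormedSpace 𝕜 F] {τ : A →L[𝕜] F} {u : 𝕜 → A}
    {u' z : A} {t : 𝕜} (hτ : ∀ a b, τ (a * b) = τ (b * a)) (hu : HasDerivAt u u' t)
    (hz : Commute (u t) z) (q : 𝕜[X]) :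
    HasDerivAt (fun s => τ (aeval (u s) q * z)) (τ (u' * aeval (u t) (derivative q) * z)) t := by
  induction q using Polynomial.induction_on' with
  | add q₁ q₂ h₁ h₂ => simpa [add_mul, mul_add] using h₁.fun_add h₂
  | monomial k c =>
    have hpow := τ.hasFDerivAt.comp_hasDerivAt t ((hu.fun_pow' k).mul_const z)
    have htrace := tracial_sum_pow_mul_mul_pow_mul hτ hz u' k
    simp only [Nat.pred_eq_sub_one, htrace] at hpow
    rw [← C_mul_X_pow_eq_monomial, ← smul_eq_C_mul]
    simpa [derivative_smul, derivative_X_pow, ← nsmul_eq_mul] using! hpow.const_smul c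

theorem hasDerivAt_tracial_cfc_mul {𝕜 A F : Type*} [RCLike 𝕜] [NormedRing A] [StarRing A]
    [NormedAlgebra 𝕜 A] [HasSummableGeomSeries A] {p : A → Prop}
    [IsometricContinuousFunctionalCalculus 𝕜 A p] [NormedAddCommGroup F] [NormedSpace 𝕜 F]
    {τ : A →L[𝕜] F} {u : 𝕜 → A} {u' z : A} {t : 𝕜} (hτ : ∀ a b, τ (a * b) = τ (b * a))
    (hu : HasDerivAt u u' t) (hup : ∀ᶠ s in 𝓝 t, p (u s)) (hz : Commute (u t) z)
    (hfin : (spectrum 𝕜 (u t)).Finite) {f : 𝕜 → 𝕜}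
    (hcont : ∀ᶠ s in 𝓝 t, ContinuousOn f (spectrum 𝕜 (u s)))
    (hf : ∀ l ∈ spectrum 𝕜 (u t), DifferentiableAt 𝕜 f l) :
    HasDerivAt (fun s => τ (cfc f (u s) * z)) (τ (u' * cfc (deriv f) (u t) * z)) t := by
  obtain ⟨q, hq⟩ := exists_polynomial_eval_eq_and_eval_derivative_eq hfin.toFinset f (deriv f)
  simp only [Set.Finite.mem_toFinset] at hq
  have hut : p (u t) := hup.self_of_nhds
  have hderiv : cfc (deriv f) (u t) = aeval (u t) (derivative q) := by
    rw [← cfc_polynomial (derivative q) (u t) hut]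
    exact cfc_congr fun l hl => (hq l hl).2.symm
  have hrem : HasFDerivAt (cfc fun l => f l - q.eval l) (0 : A →L[𝕜] A) (u t) :=
    hasFDerivAt_cfc_zero_of_hasDerivAt_zero hut hfin (fun l hl => by simp [(hq l hl).1])
      fun l hl => by simpa [(hq l hl).2] using (hf l hl).hasDerivAt.fun_sub (q.hasDerivAt l)
  have hremτ : HasDerivAt (fun s => τ (cfc (fun l => f l - q.eval l) (u s) * z)) 0 t := by
    simpa using! τ.hasFDerivAt.comp_hasDerivAt t ((hrem.comp_hasDerivAt t hu).mul_const z)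
  have hsplit : ∀ᶠ s in 𝓝 t, τ (cfc f (u s) * z) =
      τ (aeval (u s) q * z) + τ (cfc (fun l => f l - q.eval l) (u s) * z) := by
    filter_upwards [hup, hcont] with s hs hfs
    rw [cfc_sub f (fun l => q.eval l) (u s), cfc_polynomial q (u s), ← map_add, ← add_mul,
      add_sub_cancel]
  rw [hderiv, ← add_zero (τ _)]
  exact ((hasDerivAt_tracial_aeval_mul hτ hu hz q).fun_add hremτ).congr_of_eventuallyEq hsplit

theorem stmt13_general {n 𝕜 : Type*} [Fintype n] [DecidableEq n] [RCLike 𝕜]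
    {X Y Z : Matrix n n 𝕜} (hX : X.IsHermitian) (hY : Y.IsHermitian) (hcomm : Commute X Z)
    {f : ℝ → ℝ} (hf : ∀ i, DifferentiableAt ℝ f (hX.eigenvalues i)) :
    HasDerivAt (fun t : ℝ => trace (cfc f (X + t • Y) * Z))
      (trace (Y * cfc (deriv f) X * Z)) 0 := by
  open scoped Matrix.Norms.L2Operator in
  let _ : NormedAlgebra ℝ (Matrix n n 𝕜) :=
    { norm_smul_le := fun r A => by rw [← algebraMap_smul 𝕜 r A, norm_smul, norm_algebraMap'] }
  let τ : Matrix n n 𝕜 →L[ℝ] 𝕜 := (traceLinearMap n ℝ 𝕜).toContinuousLinearMap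
  have hline : HasDerivAt (fun t : ℝ => X + t • Y) Y 0 := by
    simpa using ((hasDerivAt_id (0 : ℝ)).smul_const Y).const_add X
  have hsa (t : ℝ) : IsSelfAdjoint (X + t • Y) :=
    hX.isSelfAdjoint.add ((IsSelfAdjoint.all t).smul hY.isSelfAdjoint)
  have hcont (t : ℝ) : ContinuousOn f (spectrum ℝ (X + t • Y)) :=
    (X + t • Y).finite_real_spectrum.continuousOn f
  have hspec : ∀ l ∈ spectrum ℝ X, DifferentiableAt ℝ f l := by
    rw [hX.spectrum_real_eq_range_eigenvalues]
    exact Set.forall_mem_range.mpr hf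
  simpa [τ] using hasDerivAt_tracial_cfc_mul (τ := τ) (z := Z) trace_mul_comm hline (.of_forall hsa)
    (by simpa using hcomm) (by simpa using X.finite_real_spectrum) (.of_forall hcont)
    (by simpa using hspec)

/-- Derivative formula: if X Z = Z X with X, Y, Z Hermitian and f is C¹ on an open interval
containing the eigenvalues of X, then d/dt Tr[f(X + tY) Z] at t = 0 equals Tr[Y f'(X) Z]. -/
theorem stmt13 {n : ℕ} (X Y Z : Matrix (Fin n) (Fin n) ℂ)
    (hX : X.IsHermitian) (hY : Y.IsHermitian) (hZ : Z.IsHermitian)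
    (hcomm : X * Z = Z * X) (f : ℝ → ℝ) (a b : ℝ)
    (hf : ContDiffOn ℝ 1 f (Set.Ioo a b))
    (hspec : ∀ i, hX.eigenvalues i ∈ Set.Ioo a b) :
    HasDerivAt (fun t : ℝ => Matrix.trace (cfc f (X + t • Y) * Z))
      (Matrix.trace (Y * cfc (deriv f) X * Z)) 0 :=
  stmt13_general hX hY hcomm fun i =>
    (hf.differentiableOn one_ne_zero).differentiableAt (isOpen_Ioo.mem_nhds (hspec i))
end

section
/- Let q ∈ (1,2], γ > 0, let H be an n×n contraction (H*H ≤ I), let X be an n×n positive definite matrix with Tr(X) = γ, and let B be an n×n Hermitian matrix with log_q(X) > H B H* and B > −(1/(q−1)) I. Then S_{H,q}(X | exp_q(B)) equals the supremum, over all n×n positive definite matrices A, of Tr(X^{2−q} A) − γ · log_q(γ^{−1} Tr exp_q(A + H B H*)) − γ + Tr exp_q(B), and this supremum is attained (at A₀ = log_q(X) − H B H*). -/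
open Matrix ComplexOrder

/-!
Put `p = q - 1` and `Y = exp_q C`, so that `C = log_q Y`. Then
`Tr X^(1-p) (log_q Y - log_q X) = (Tr X^(1-p) Y^p - Tr X) / p`, and Hölder's inequality
`Tr X^(1-p) Y^p ≤ (Tr X)^(1-p) (Tr Y)^p` bounds this by `Tr X · log_q (Tr Y / Tr X)`, with equality
at `Y = X`. Taking `C = A + H B H*` gives the variational formula, `Y = X` being
`A = log_q X - H B H*`. In the eigenbases of `X` and `Y`, with transition matrix `W`,
`Tr f(X) g(Y) = ∑ |W i j|² f(x i) g(y j)`, so trace Hölder is the weighted scalar inequality.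
-/

theorem sum_mul_rpow_mul_rpow_le {α : Type*} (s : Finset α) {w f g : α → ℝ}
    (hw : ∀ i ∈ s, 0 ≤ w i) (hf : ∀ i ∈ s, 0 ≤ f i) (hg : ∀ i ∈ s, 0 ≤ g i) {a b : ℝ}
    (ha : 0 ≤ a) (hb : 0 ≤ b) (hab : a + b = 1) :
    ∑ i ∈ s, w i * (f i ^ a * g i ^ b) ≤
      (∑ i ∈ s, w i * f i) ^ a * (∑ i ∈ s, w i * g i) ^ b := by
  rcases ha.eq_or_lt with rfl | ha'
  · obtain rfl : b = 1 := by linarith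
    simp
  rcases hb.eq_or_lt with rfl | hb'
  · obtain rfl : a = 1 := by linarith
    simp
  have hconj : a⁻¹.HolderConjugate b⁻¹ :=
    ⟨by simpa using hab, inv_pos.mpr ha', inv_pos.mpr hb'⟩
  have hholder := Real.inner_le_Lp_mul_Lq_of_nonneg s hconj
    (f := fun i => (w i * f i) ^ a) (g := fun i => (w i * g i) ^ b)
    (fun i hi => Real.rpow_nonneg (mul_nonneg (hw i hi) (hf i hi)) a)
    (fun i hi => Real.rpow_nonneg (mul_nonneg (hw i hi) (hg i hi)) b)
  simp only [one_div, inv_inv] at hholder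
  have hterm : ∀ i ∈ s, w i * (f i ^ a * g i ^ b) = (w i * f i) ^ a * (w i * g i) ^ b := by
    intro i hi
    have hsplit : w i = w i ^ a * w i ^ b := by
      rw [← Real.rpow_add_of_nonneg (hw i hi) ha hb, hab, Real.rpow_one]
    rw [Real.mul_rpow (hw i hi) (hf i hi), Real.mul_rpow (hw i hi) (hg i hi), mul_mul_mul_comm,
      ← hsplit]
  rw [Finset.sum_congr rfl hterm]
  convert! hholder using 3 <;> refine Finset.sum_congr rfl fun i hi => ?_
  · exact (Real.rpow_rpow_inv (mul_nonneg (hw i hi) (hf i hi)) ha'.ne').symm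
  · exact (Real.rpow_rpow_inv (mul_nonneg (hw i hi) (hg i hi)) hb'.ne').symm

section HermitianMatrices

variable {ι κ 𝕜 : Type*} [Fintype ι] [DecidableEq ι] [Fintype κ] [DecidableEq κ] [RCLike 𝕜]

lemma nonneg_of_mem_spectrum {X : Matrix ι ι 𝕜} (hX : X.PosSemidef) {x : ℝ}
    (hx : x ∈ spectrum ℝ X) : 0 ≤ x := by
  open scoped MatrixOrder in exact spectrum_nonneg_of_nonneg hX.nonneg hx

theorem re_trace_cfc_mul_cfc {X Y : Matrix ι ι 𝕜} (hX : X.IsHermitian) (hY : Y.IsHermitian)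
    (f g : ℝ → ℝ) :
    RCLike.re (trace (cfc f X * cfc g Y)) = ∑ p : ι × ι,
      ‖(star (hX.eigenvectorUnitary : Matrix ι ι 𝕜) * hY.eigenvectorUnitary) p.1 p.2‖ ^ 2 *
        (f (hX.eigenvalues p.1) * g (hY.eigenvalues p.2)) := by
  set U := (hX.eigenvectorUnitary : Matrix ι ι 𝕜)
  set V := (hY.eigenvectorUnitary : Matrix ι ι 𝕜)
  set D : Matrix ι ι 𝕜 := diagonal (RCLike.ofReal ∘ f ∘ hX.eigenvalues)
  set E : Matrix ι ι 𝕜 := diagonal (RCLike.ofReal ∘ g ∘ hY.eigenvalues)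
  have hcyc : trace (cfc f X * cfc g Y) = trace (D * (star U * V) * E * star (star U * V)) := by
    rw [hX.cfc_eq, hY.cfc_eq]
    change trace (U * D * star U * (V * E * star V)) = _
    rw [star_mul, star_star, mul_assoc U, mul_assoc U, trace_mul_comm]
    simp only [mul_assoc]
  have hentry (i j : ι) : (D * (star U * V) * E) i j * star (star U * V) j i =
      (‖(star U * V) i j‖ ^ 2 * (f (hX.eigenvalues i) * g (hY.eigenvalues j)) : ℝ) := by
    rw [mul_diagonal, diagonal_mul, star_apply, RCLike.star_def]
    push_cast
    rw [← RCLike.mul_conj]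
    simp only [Function.comp_apply]
    ring
  rw [hcyc, trace]
  simp only [diag_apply, mul_apply (M := D * (star U * V) * E), hentry, map_sum, RCLike.ofReal_re,
    Fintype.sum_prod_type]

theorem re_trace_cfc_rpow_mul_cfc_rpow_le {X Y : Matrix ι ι 𝕜} (hX : X.PosSemidef)
    (hY : Y.PosSemidef) {a b : ℝ} (ha : 0 ≤ a) (hb : 0 ≤ b) (hab : a + b = 1) :
    RCLike.re (trace (cfc (fun x : ℝ => x ^ a) X * cfc (fun y : ℝ => y ^ b) Y)) ≤
      RCLike.re (trace X) ^ a * RCLike.re (trace Y) ^ b := by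
  have htrX := re_trace_cfc_mul_cfc hX.1 hY.1 (fun x => x) (fun _ => 1)
  have htrY := re_trace_cfc_mul_cfc hX.1 hY.1 (fun _ => 1) (fun y => y)
  rw [cfc_id' ℝ X hX.1.isSelfAdjoint, cfc_const_one ℝ Y hY.1.isSelfAdjoint, mul_one] at htrX
  rw [cfc_id' ℝ Y hY.1.isSelfAdjoint, cfc_const_one ℝ X hX.1.isSelfAdjoint, one_mul] at htrY
  simp only [mul_one] at htrX
  simp only [one_mul] at htrY
  rw [re_trace_cfc_mul_cfc hX.1 hY.1, htrX, htrY]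
  exact sum_mul_rpow_mul_rpow_le _ (fun _ _ => by positivity) (fun p _ => hX.eigenvalues_nonneg p.1)
    (fun p _ => hY.eigenvalues_nonneg p.2) ha hb hab

theorem posSemidef_one_sub_mul_conjTranspose {H : Matrix ι κ 𝕜}
    (hH : (1 - Hᴴ * H).PosSemidef) : (1 - H * Hᴴ).PosSemidef := by
  let _ : Invertible (1 : Matrix ι ι 𝕜) := invertibleOne
  let _ : Invertible (1 : Matrix κ κ 𝕜) := invertibleOne
  -- The two sides are the Schur complements of the block matrix `[[1, H], [Hᴴ, 1]]`.
  have h₁ := PosDef.fromBlocks₁₁ H (1 : Matrix κ κ 𝕜) (PosDef.one : (1 : Matrix ι ι 𝕜).PosDef)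
  have h₂ := PosDef.fromBlocks₂₂ (1 : Matrix ι ι 𝕜) H (PosDef.one : (1 : Matrix κ κ 𝕜).PosDef)
  simp only [inv_one, Matrix.mul_one] at h₁ h₂
  exact h₂.mp (h₁.mpr hH)

theorem posSemidef_mul_mul_conjTranspose_add_smul_one {H : Matrix ι κ 𝕜} {B : Matrix κ κ 𝕜} {s : ℝ}
    (hs : 0 ≤ s) (hH : (1 - Hᴴ * H).PosSemidef) (hB : (B + s • (1 : Matrix κ κ 𝕜)).PosSemidef) :
    (H * B * Hᴴ + s • (1 : Matrix ι ι 𝕜)).PosSemidef := by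
  have hdecomp : H * B * Hᴴ + s • (1 : Matrix ι ι 𝕜) =
      H * (B + s • (1 : Matrix κ κ 𝕜)) * Hᴴ + s • (1 - H * Hᴴ) := by
    simp only [Matrix.mul_add, Matrix.add_mul, smul_sub, Matrix.mul_smul, Matrix.smul_mul,
      Matrix.mul_one]
    abel
  rw [hdecomp]
  exact (hB.mul_mul_conjTranspose_same H).add ((posSemidef_one_sub_mul_conjTranspose hH).smul hs)

lemma neg_le_of_mem_spectrum {M : Matrix ι ι 𝕜} {s : ℝ}
    (h : (M + s • (1 : Matrix ι ι 𝕜)).PosSemidef) {x : ℝ} (hx : x ∈ spectrum ℝ M) : -s ≤ x := by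
  have hmem : x + s ∈ spectrum ℝ (M + s • (1 : Matrix ι ι 𝕜)) := by
    rw [add_comm M, ← Algebra.algebraMap_eq_smul_one]
    exact spectrum.add_mem_add_iff.mpr hx
  linarith [nonneg_of_mem_spectrum h hmem]

lemma cfc_cfc_of_leftInvOn {M : Matrix ι ι 𝕜} (hM : M.IsHermitian) {f g : ℝ → ℝ}
    (h : Set.LeftInvOn g f (spectrum ℝ M)) : cfc g (cfc f M) = M := by
  have hfin : (spectrum ℝ M).Finite := finite_real_spectrum
  rw [← cfc_comp g f M hM.isSelfAdjoint ((hfin.image f).continuousOn g) (hfin.continuousOn f),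
    cfc_congr (f := g ∘ f) (g := id) h, cfc_id ℝ M hM.isSelfAdjoint]

end HermitianMatrices

section DeformedFunctions

variable {q : ℝ}

lemma one_add_mul_logq (hq : q ≠ 1) (x : ℝ) : 1 + (q - 1) * logq q x = x ^ (q - 1) := by
  rw [logq, mul_div_cancel₀ _ (sub_ne_zero.mpr hq)]
  ring

lemma expq_nonneg {x : ℝ} (hx : 0 ≤ 1 + (q - 1) * x) : 0 ≤ expq q x := by
  unfold expq
  split_ifs <;> positivity

lemma logq_expq (hq : q ≠ 1) {x : ℝ} (hx : 0 ≤ 1 + (q - 1) * x) : logq q (expq q x) = x := by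
  rw [expq, if_neg hq, logq, one_div, Real.rpow_inv_rpow hx (sub_ne_zero.mpr hq),
    add_sub_cancel_left, mul_div_cancel_left₀ _ (sub_ne_zero.mpr hq)]

lemma expq_logq (hq : q ≠ 1) {x : ℝ} (hx : 0 ≤ x) : expq q (logq q x) = x := by
  rw [expq, if_neg hq, one_add_mul_logq hq, one_div, Real.rpow_rpow_inv hx (sub_ne_zero.mpr hq)]

lemma mul_logq_inv_mul {s t : ℝ} (hs : 0 < s) (ht : 0 ≤ t) :
    s * logq q (s⁻¹ * t) = (q - 1)⁻¹ * (s ^ (2 - q) * t ^ (q - 1) - s) := by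
  have hpow : s ^ (2 - q) = s * s⁻¹ ^ (q - 1) := by
    rw [Real.inv_rpow hs.le, show 2 - q = 1 - (q - 1) by ring, Real.rpow_sub hs, Real.rpow_one,
      div_eq_mul_inv]
  rw [logq, Real.mul_rpow (inv_nonneg.mpr hs.le) ht, hpow]
  ring

end DeformedFunctions

section MatrixPowers

variable {n : ℕ} {q : ℝ} {X Y C : Matrix (Fin n) (Fin n) ℂ}

lemma trRe_add (M N : Matrix (Fin n) (Fin n) ℂ) : trRe (M + N) = trRe M + trRe N := by
  simp [trRe]

lemma trRe_sub (M N : Matrix (Fin n) (Fin n) ℂ) : trRe (M - N) = trRe M - trRe N := by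
  simp [trRe]

lemma trRe_smul (c : ℝ) (M : Matrix (Fin n) (Fin n) ℂ) : trRe (c • M) = c * trRe M := by
  simp [trRe]

lemma trRe_mul_comm (M N : Matrix (Fin n) (Fin n) ℂ) : trRe (M * N) = trRe (N * M) := by
  rw [trRe, trace_mul_comm, trRe]

lemma trRe_nonneg (hX : X.PosSemidef) : 0 ≤ trRe X :=
  (Complex.nonneg_iff.mp hX.trace_nonneg).1

lemma mpow_mul_mpow_of_add_eq_one (hX : X.PosSemidef) {a b : ℝ} (ha : 0 ≤ a) (hb : 0 ≤ b)
    (hab : a + b = 1) : mpow X a * mpow X b = X := by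
  have hsa := hX.isHermitian.isSelfAdjoint
  have hfin : (spectrum ℝ X).Finite := finite_real_spectrum
  have hpow : (spectrum ℝ X).EqOn (fun x => x ^ a * x ^ b) id := fun x hx => by
    simp only [id, ← Real.rpow_add_of_nonneg (nonneg_of_mem_spectrum hX hx) ha hb, hab,
      Real.rpow_one]
  rw [mpow, mpow, ← cfc_mul _ _ X (hfin.continuousOn _) (hfin.continuousOn _), cfc_congr hpow,
    cfc_id ℝ X]

theorem trRe_mpow_mul_mpow_le (hX : X.PosSemidef) (hY : Y.PosSemidef) {a b : ℝ}
    (ha : 0 ≤ a) (hb : 0 ≤ b) (hab : a + b = 1) :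
    trRe (mpow X a * mpow Y b) ≤ trRe X ^ a * trRe Y ^ b :=
  re_trace_cfc_rpow_mul_cfc_rpow_le hX hY ha hb hab

lemma mlogq_eq_smul (hX : X.IsHermitian) (q : ℝ) :
    mlogq q X = (q - 1)⁻¹ • (mpow X (q - 1) - 1) := by
  have hsa := hX.isSelfAdjoint
  have hfin : (spectrum ℝ X).Finite := finite_real_spectrum
  have hlogq : logq q = fun x => (q - 1)⁻¹ * (x ^ (q - 1) - 1) := by
    ext x
    rw [logq, div_eq_inv_mul]
  rw [mlogq, hlogq, cfc_const_mul _ _ X (hfin.continuousOn _),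
    cfc_sub _ _ X (hfin.continuousOn _) (hfin.continuousOn _), cfc_const_one ℝ X, mpow]

lemma one_add_mul_nonneg_of_mem_spectrum (hq : 1 < q) (hC : (C + (1 / (q - 1)) • 1).PosSemidef)
    {x : ℝ} (hx : x ∈ spectrum ℝ C) : 0 ≤ 1 + (q - 1) * x := by
  have hp : 0 < q - 1 := sub_pos.mpr hq
  have hscale := mul_le_mul_of_nonneg_left (neg_le_of_mem_spectrum hC hx) hp.le
  rw [mul_neg, mul_one_div_cancel hp.ne'] at hscale
  linarith

lemma mlogq_mexpq (hq : 1 < q) (hC : (C + (1 / (q - 1)) • 1).PosSemidef) :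
    mlogq q (mexpq q C) = C := by
  have hherm : C.IsHermitian := by
    simpa using hC.isHermitian.sub (isHermitian_one.smul (IsSelfAdjoint.all (1 / (q - 1))))
  exact cfc_cfc_of_leftInvOn hherm fun _ hx =>
    logq_expq hq.ne' (one_add_mul_nonneg_of_mem_spectrum hq hC hx)

lemma mexpq_mlogq (hq : q ≠ 1) (hX : X.PosSemidef) : mexpq q (mlogq q X) = X :=
  cfc_cfc_of_leftInvOn hX.isHermitian fun _ hx => expq_logq hq (nonneg_of_mem_spectrum hX hx)

lemma posSemidef_mexpq (hq : 1 < q) (hC : (C + (1 / (q - 1)) • 1).PosSemidef) :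
    (mexpq q C).PosSemidef := by
  open scoped MatrixOrder in
  exact nonneg_iff_posSemidef.mp <| cfc_nonneg fun _ hx =>
    expq_nonneg (one_add_mul_nonneg_of_mem_spectrum hq hC hx)

theorem trRe_mpow_mul_mlogq_sub_le (hq : q ∈ Set.Ioc (1 : ℝ) 2) (hX : X.PosSemidef)
    (htr : 0 < trRe X) (hY : Y.PosSemidef) :
    trRe (mpow X (2 - q) * (mlogq q Y - mlogq q X)) ≤
      trRe X * logq q ((trRe X)⁻¹ * trRe Y) := by
  have hp : 0 < q - 1 := sub_pos.mpr hq.1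
  have hdiff : trRe (mpow X (2 - q) * (mlogq q Y - mlogq q X)) =
      (q - 1)⁻¹ * (trRe (mpow X (2 - q) * mpow Y (q - 1)) - trRe X) := by
    rw [mlogq_eq_smul hX.1, mlogq_eq_smul hY.1, ← smul_sub, sub_sub_sub_cancel_right, mul_smul_comm,
      mul_sub, mpow_mul_mpow_of_add_eq_one hX (by linarith [hq.2]) hp.le (by ring), trRe_smul,
      trRe_sub]
  rw [hdiff, mul_logq_inv_mul htr (trRe_nonneg hY)]
  gcongr
  exact trRe_mpow_mul_mpow_le hX hY (by linarith [hq.2]) hp.le (by ring)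

theorem isGreatest_trRe_mpow_mul_sub_logq {K : Matrix (Fin n) (Fin n) ℂ}
    (hq : q ∈ Set.Ioc (1 : ℝ) 2) (hX : X.PosSemidef) (htr : 0 < trRe X)
    (hK : (K + (1 / (q - 1)) • 1).PosSemidef) (hXK : (mlogq q X - K).PosDef) :
    IsGreatest
      ((fun A => trRe (mpow X (2 - q) * A) - trRe X * logq q ((trRe X)⁻¹ * trRe (mexpq q (A + K))))
        '' {A | A.PosDef})
      (trRe (mpow X (2 - q) * (mlogq q X - K))) := by
  refine ⟨⟨mlogq q X - K, hXK, ?_⟩, ?_⟩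
  · have hone : logq q 1 = 0 := by simp [logq]
    simp only [sub_add_cancel, mexpq_mlogq hq.1.ne' hX, inv_mul_cancel₀ htr.ne', hone, mul_zero,
      sub_zero]
  · rintro _ ⟨A, hA : A.PosDef, rfl⟩
    have hAK : (A + K + (1 / (q - 1)) • 1).PosSemidef := by
      simpa only [add_assoc] using hA.posSemidef.add hK
    have hle := trRe_mpow_mul_mlogq_sub_le hq hX htr (posSemidef_mexpq hq.1 hAK)
    rw [mlogq_mexpq hq.1 hAK] at hle
    simp only [mul_sub, mul_add, trRe_sub, trRe_add] at hle ⊢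
    linarith

end MatrixPowers

lemma STq_mexpq_eq {n : ℕ} {q : ℝ} (hq : 1 < q) (H X : Matrix (Fin n) (Fin n) ℂ)
    {B : Matrix (Fin n) (Fin n) ℂ} (hB : (B + (1 / (q - 1)) • 1).PosSemidef) :
    STq H q X (mexpq q B) =
      trRe (mpow X (2 - q) * (mlogq q X - H * B * Hᴴ)) - trRe X + trRe (mexpq q B) := by
  have hcyc : trRe (Hᴴ * mpow X (2 - q) * H * B) = trRe (mpow X (2 - q) * (H * B * Hᴴ)) := by
    rw [mul_assoc, mul_assoc, trRe_mul_comm]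
    simp only [mul_assoc]
  rw [STq, mlogq_mexpq hq hB, trRe_add, trRe_sub, trRe_sub, hcyc, mul_sub, trRe_sub]

theorem stmt15_general {n : ℕ} {q : ℝ} (hq : q ∈ Set.Ioc (1 : ℝ) 2) {γ : ℝ} (hγ : 0 < γ)
    {H X B : Matrix (Fin n) (Fin n) ℂ} (hX : X.PosSemidef) (hTr : trace X = (γ : ℂ))
    (hB : (B + (1 / (q - 1)) • 1).PosSemidef)
    (hHB : (H * B * Hᴴ + (1 / (q - 1)) • 1).PosSemidef)
    (hXB : (mlogq q X - H * B * Hᴴ).PosDef) :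
    IsGreatest
      {r : ℝ | ∃ A : Matrix (Fin n) (Fin n) ℂ, A.PosDef ∧
        r = trRe (mpow X (2 - q) * A)
              - γ * logq q (γ⁻¹ * trRe (mexpq q (A + H * B * Hᴴ))) - γ + trRe (mexpq q B)}
      (STq H q X (mexpq q B)) := by
  obtain rfl : trRe X = γ := by simp [trRe, hTr]
  obtain ⟨⟨A₀, hA₀, hmax⟩, hub⟩ := isGreatest_trRe_mpow_mul_sub_logq hq hX hγ hHB hXB
  rw [STq_mexpq_eq hq.1 H X hB]
  refine ⟨⟨A₀, hA₀, by rw [← hmax]⟩, ?_⟩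
  rintro _ ⟨A, hA, rfl⟩
  gcongr
  exact hub ⟨A, hA, rfl⟩

/-- One-parameter variational expression (ii) for the reduced Tsallis relative entropy. -/
theorem stmt15 {n : ℕ} (q : ℝ) (hq : q ∈ Set.Ioc (1 : ℝ) 2) (γ : ℝ) (hγ : 0 < γ)
    (H X B : Matrix (Fin n) (Fin n) ℂ) (hH : (1 - Hᴴ * H).PosSemidef)
    (hX : X.PosDef) (hTr : Matrix.trace X = (γ : ℂ)) (hB : B.IsHermitian)
    (hXB : (mlogq q X - H * B * Hᴴ).PosDef)
    (hBdom : (B + ((1 / (q - 1) : ℝ)) • (1 : Matrix (Fin n) (Fin n) ℂ)).PosDef) :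
    IsGreatest
      {r : ℝ | ∃ A : Matrix (Fin n) (Fin n) ℂ, A.PosDef ∧
        r = trRe (mpow X (2 - q) * A)
              - γ * logq q (γ⁻¹ * trRe (mexpq q (A + H * B * Hᴴ))) - γ + trRe (mexpq q B)}
      (STq H q X (mexpq q B)) := by
  have hs : 0 ≤ 1 / (q - 1) := one_div_nonneg.mpr (sub_pos.mpr hq.1).le
  exact stmt15_general hq hγ hX.posSemidef hTr hBdom.posSemidef
    (posSemidef_mul_mul_conjTranspose_add_smul_one hs hH hBdom.posSemidef) hXB
end

section
/- Let q ∈ (1,2] and let A and B be n×n positive semidefinite Hermitian matrices. Then Tr[exp_q(A + B)] ≤ Tr[exp_q(A) exp_q(B)]. -/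
open Matrix ComplexOrder

/-!
Put `W = exp_q (A + B)`, `X = exp_q A`, `Y = exp_q B` and `s = 2 - q`. Then `1 ≤ X`, `1 ≤ Y` and
`W ^ (1 - s) = X ^ (1 - s) + Y ^ (1 - s) - 1`, so that
`Tr W = Tr W ^ s (X ^ (1 - s) - 1) + Tr W ^ s Y ^ (1 - s)`. By Lieb's theorem the last term is
concave in `(W, Y)`, hence lies below its tangent at `(X, 1)`; the first lies below its tangent at
`W = X`. Adding the tangents gives `Tr W ≤ Tr X - Tr X ^ s + Tr X ^ s Y`, and the right-hand side is
`Tr X Y - Tr (X - X ^ s) (Y - 1) ≤ Tr X Y`.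

The tangent inequality for `Tr W ^ s Y ^ (1 - s)` is proved without Lieb's theorem. Since `x ^ s` is
an integral over `t` of multiples of `x / (t + x)`, this trace is an integral of parallel sums of
multiples of left multiplication by `W` and right multiplication by `Y`, and the variational
inequality `⟨P + Q, (L : R) (P + Q)⟩ ≤ ⟨P, L P⟩ + ⟨Q, R Q⟩` for the parallel sum `L : R` bounds each
of them.
-/

open scoped MatrixOrder

section RpowIntegral

open MeasureTheory Set

/-- The derivative in `x` of Mathlib's integrand `Real.rpowIntegrand₀₁ s t x`, which represents
`x ^ s` as an integral over `t`. -/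
noncomputable def rpowIntegrandDeriv (s t x : ℝ) : ℝ := t ^ s / (t + x) ^ 2

lemma rpowIntegrand₀₁_le_tangent {t x y : ℝ} (s : ℝ) (ht : 0 < t) (hx : 0 ≤ x) (hy : 0 ≤ y) :
    Real.rpowIntegrand₀₁ s t y ≤
      Real.rpowIntegrand₀₁ s t x + rpowIntegrandDeriv s t x * (y - x) := by
  have gap : Real.rpowIntegrand₀₁ s t x + rpowIntegrandDeriv s t x * (y - x) -
      Real.rpowIntegrand₀₁ s t y = t ^ s * ((y - x) ^ 2 / ((t + x) ^ 2 * (t + y))) := by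
    unfold Real.rpowIntegrand₀₁ rpowIntegrandDeriv
    field_simp
    ring
  have gap_nonneg : 0 ≤ t ^ s * ((y - x) ^ 2 / ((t + x) ^ 2 * (t + y))) := by positivity
  linarith

lemma rpowIntegrand₀₁_sub_mul_rpowIntegrandDeriv {t x : ℝ} (s : ℝ) (ht : 0 < t) (hx : 0 ≤ x) :
    Real.rpowIntegrand₀₁ s t x - x * rpowIntegrandDeriv s t x =
      t ^ s / t * (x / (t + x)) ^ 2 := by
  unfold Real.rpowIntegrand₀₁ rpowIntegrandDeriv
  field_simp
  ring

variable {s x : ℝ} {μ : Measure ℝ}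

lemma integrableOn_rpowIntegrandDeriv (hx : 0 < x)
    (h : IntegrableOn (fun t => Real.rpowIntegrand₀₁ s t x) (Ioi 0) μ) :
    IntegrableOn (fun t => rpowIntegrandDeriv s t x) (Ioi 0) μ := by
  have hmeas : Measurable fun t => rpowIntegrandDeriv s t x := by
    unfold rpowIntegrandDeriv
    fun_prop
  refine Integrable.mono' (h.const_mul x⁻¹) hmeas.aestronglyMeasurable ?_
  filter_upwards [ae_restrict_mem measurableSet_Ioi] with t (ht : 0 < t)
  have deriv_nonneg : 0 ≤ rpowIntegrandDeriv s t x := by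
    unfold rpowIntegrandDeriv
    positivity
  have mul_deriv_le : 0 ≤ Real.rpowIntegrand₀₁ s t x - x * rpowIntegrandDeriv s t x := by
    rw [rpowIntegrand₀₁_sub_mul_rpowIntegrandDeriv s ht hx.le]
    positivity
  rw [Real.norm_of_nonneg deriv_nonneg, ← div_eq_inv_mul, le_div_iff₀' hx]
  linarith

lemma integral_rpowIntegrandDeriv (hx : 0 < x)
    (hμ : ∀ y, 0 < y → IntegrableOn (fun t => Real.rpowIntegrand₀₁ s t y) (Ioi 0) μ ∧
      y ^ s = ∫ t in Ioi 0, Real.rpowIntegrand₀₁ s t y ∂μ) :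
    ∫ t in Ioi 0, rpowIntegrandDeriv s t x ∂μ = s * x ^ (s - 1) := by
  set slope := ∫ t in Ioi 0, rpowIntegrandDeriv s t x ∂μ with hslope
  have hderiv := integrableOn_rpowIntegrandDeriv hx (hμ x hx).1
  have le_tangent : ∀ y, 0 < y → y ^ s ≤ x ^ s + slope * (y - x) := by
    intro y hy
    rw [(hμ y hy).2, (hμ x hx).2, hslope, ← integral_mul_const,
      ← integral_add (hμ x hx).1 (hderiv.mul_const _)]
    exact setIntegral_mono_on (hμ y hy).1 ((hμ x hx).1.add (hderiv.mul_const _))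
      measurableSet_Ioi fun t ht => rpowIntegrand₀₁_le_tangent s ht hx.le hy.le
  -- `y ^ s` lies below the line of slope `slope` and touches it at `x`, so the slopes agree.
  have hmax : IsLocalMax (fun y : ℝ => y ^ s - slope * (y - x)) x := by
    filter_upwards [lt_mem_nhds hx] with y hy
    linarith [le_tangent y hy]
  have hd : HasDerivAt (fun y : ℝ => y ^ s - slope * (y - x)) (s * x ^ (s - 1) - slope * 1) x :=
    (Real.hasDerivAt_rpow_const (Or.inl hx.ne')).sub
      (((hasDerivAt_id x).sub_const x).const_mul slope)
  linarith [hmax.hasDerivAt_eq_zero hd]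

lemma integral_rpowIntegrand₀₁_sub_mul_rpowIntegrandDeriv (hx : 0 < x)
    (hμ : ∀ y, 0 < y → IntegrableOn (fun t => Real.rpowIntegrand₀₁ s t y) (Ioi 0) μ ∧
      y ^ s = ∫ t in Ioi 0, Real.rpowIntegrand₀₁ s t y ∂μ) :
    ∫ t in Ioi 0, (Real.rpowIntegrand₀₁ s t x - x * rpowIntegrandDeriv s t x) ∂μ =
      (1 - s) * x ^ s := by
  obtain ⟨hint, heq⟩ := hμ x hx
  rw [integral_sub hint ((integrableOn_rpowIntegrandDeriv hx hint).const_mul x), ← heq,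
    integral_const_mul, integral_rpowIntegrandDeriv hx hμ, Real.rpow_sub_one hx.ne']
  field_simp

lemma mul_div_rpow_eq_rpow_mul_rpow {s w y : ℝ} (hs : s < 1) (hw : 0 ≤ w) (hy : 0 ≤ y) :
    y * (w / y) ^ s = w ^ s * y ^ (1 - s) := by
  rcases hy.eq_or_lt with rfl | hy
  · rw [zero_mul, Real.zero_rpow (sub_pos.2 hs).ne', mul_zero]
  rw [Real.div_rpow hw hy.le, Real.rpow_sub hy, Real.rpow_one]
  ring

end RpowIntegral

section LeftRightForm

open MeasureTheory

variable {𝕜 m n : Type*} [RCLike 𝕜] [Fintype m] [DecidableEq m] [Fintype n] [DecidableEq n]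
  {A : Matrix m m 𝕜} {B : Matrix n n 𝕜} {φ ψ : ℝ → ℝ → ℝ}

/-- The quadratic form `⟨K, φ(L_A, R_B) K⟩` for the Hilbert–Schmidt inner product, where `L_A` is
left multiplication by `A` and `R_B` is right multiplication by `B`. These operators commute, and
the form is written out in their joint eigenbasis `uᵢ vⱼᴴ`, where `uᵢ` and `vⱼ` are eigenvectors of
`A` and `B`. -/
noncomputable def leftRightForm (hA : A.IsHermitian) (hB : B.IsHermitian) (φ : ℝ → ℝ → ℝ)
    (K : Matrix m n 𝕜) : ℝ :=
  ∑ i, ∑ j, φ (hA.eigenvalues i) (hB.eigenvalues j) *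
    ‖((hA.eigenvectorUnitary : Matrix m m 𝕜)ᴴ * K *
      (hB.eigenvectorUnitary : Matrix n n 𝕜)) i j‖ ^ 2

lemma leftRightForm_mono (hA : A.IsHermitian) (hB : B.IsHermitian)
    (h : ∀ x ∈ spectrum ℝ A, ∀ y ∈ spectrum ℝ B, φ x y ≤ ψ x y) (K : Matrix m n 𝕜) :
    leftRightForm hA hB φ K ≤ leftRightForm hA hB ψ K := by
  unfold leftRightForm
  gcongr with i _ j _
  exact h _ (hA.eigenvalues_mem_spectrum_real i) _ (hB.eigenvalues_mem_spectrum_real j)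

lemma leftRightForm_congr (hA : A.IsHermitian) (hB : B.IsHermitian)
    (h : ∀ x ∈ spectrum ℝ A, ∀ y ∈ spectrum ℝ B, φ x y = ψ x y) (K : Matrix m n 𝕜) :
    leftRightForm hA hB φ K = leftRightForm hA hB ψ K :=
  le_antisymm (leftRightForm_mono hA hB (fun x hx y hy => (h x hx y hy).le) K)
    (leftRightForm_mono hA hB (fun x hx y hy => (h x hx y hy).ge) K)

lemma leftRightForm_add (hA : A.IsHermitian) (hB : B.IsHermitian) (φ ψ : ℝ → ℝ → ℝ)
    (K : Matrix m n 𝕜) :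
    leftRightForm hA hB (fun x y => φ x y + ψ x y) K =
      leftRightForm hA hB φ K + leftRightForm hA hB ψ K := by
  simp only [leftRightForm, add_mul, Finset.sum_add_distrib]

lemma leftRightForm_const_mul (hA : A.IsHermitian) (hB : B.IsHermitian) (c : ℝ)
    (φ : ℝ → ℝ → ℝ) (K : Matrix m n 𝕜) :
    leftRightForm hA hB (fun x y => c * φ x y) K = c * leftRightForm hA hB φ K := by
  simp only [leftRightForm, mul_assoc, Finset.mul_sum]

lemma re_trace_conjTranspose_mul_diagonal_mul (a : m → ℝ) (b : n → ℝ) (M : Matrix m n 𝕜) :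
    RCLike.re (Mᴴ * diagonal (fun i => (a i : 𝕜)) * M * diagonal (fun j => (b j : 𝕜))).trace =
      ∑ i, ∑ j, a i * b j * ‖M i j‖ ^ 2 := by
  have entry (i : m) (j : n) : star (M i j) * (a i : 𝕜) * M i j * (b j : 𝕜) =
      ((a i * b j * ‖M i j‖ ^ 2 : ℝ) : 𝕜) := by
    push_cast
    rw [← RCLike.conj_mul, RCLike.star_def]
    ring
  rw [Finset.sum_comm]
  simp only [trace, diag_apply, mul_diagonal, Matrix.mul_apply (N := M), conjTranspose_apply,
    Finset.sum_mul, entry, map_sum, RCLike.ofReal_re]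

lemma leftRightForm_mul (hA : A.IsHermitian) (hB : B.IsHermitian) (f g : ℝ → ℝ)
    (K : Matrix m n 𝕜) :
    leftRightForm hA hB (fun x y => f x * g y) K =
      RCLike.re (Kᴴ * cfc f A * K * cfc g B).trace := by
  set U := (hA.eigenvectorUnitary : Matrix m m 𝕜) with hU
  set V := (hB.eigenvectorUnitary : Matrix n n 𝕜) with hV
  have hfA : cfc f A = U * diagonal (fun i => (f (hA.eigenvalues i) : 𝕜)) * Uᴴ := hA.cfc_eq f
  have hgB : cfc g B = V * diagonal (fun j => (g (hB.eigenvalues j) : 𝕜)) * Vᴴ := hB.cfc_eq g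
  rw [leftRightForm, ← hU, ← hV, ← re_trace_conjTranspose_mul_diagonal_mul, hfA, hgB]
  simp only [conjTranspose_mul, conjTranspose_conjTranspose, Matrix.mul_assoc]
  rw [Matrix.trace_mul_comm Vᴴ]
  simp only [Matrix.mul_assoc]

lemma mul_div_add_mul_norm_add_sq_le {α β : ℝ} (hα : 0 ≤ α) (hβ : 0 ≤ β) (a b : 𝕜) :
    α * β / (α + β) * ‖a + b‖ ^ 2 ≤ α * ‖a‖ ^ 2 + β * ‖b‖ ^ 2 := by
  rcases (add_nonneg hα hβ).eq_or_lt with h | h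
  · rw [← h, div_zero, zero_mul]
    positivity
  rw [div_mul_eq_mul_div, div_le_iff₀ h]
  calc α * β * ‖a + b‖ ^ 2 ≤ α * β * (‖a‖ + ‖b‖) ^ 2 := by
        gcongr
        exact norm_add_le a b
    _ ≤ (α * ‖a‖ ^ 2 + β * ‖b‖ ^ 2) * (α + β) := by
        nlinarith [sq_nonneg (α * ‖a‖ - β * ‖b‖)]

lemma leftRightForm_mul_div_add_le (hA : A.IsHermitian) (hB : B.IsHermitian)
    (hφ : ∀ x ∈ spectrum ℝ A, ∀ y ∈ spectrum ℝ B, 0 ≤ φ x y)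
    (hψ : ∀ x ∈ spectrum ℝ A, ∀ y ∈ spectrum ℝ B, 0 ≤ ψ x y) (P Q : Matrix m n 𝕜) :
    leftRightForm hA hB (fun x y => φ x y * ψ x y / (φ x y + ψ x y)) (P + Q) ≤
      leftRightForm hA hB φ P + leftRightForm hA hB ψ Q := by
  simp only [leftRightForm, ← Finset.sum_add_distrib, Matrix.mul_add, Matrix.add_mul,
    Matrix.add_apply]
  gcongr with i _ j _
  have hx := hA.eigenvalues_mem_spectrum_real i
  have hy := hB.eigenvalues_mem_spectrum_real j
  exact mul_div_add_mul_norm_add_sq_le (hφ _ hx _ hy) (hψ _ hx _ hy) _ _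

section Integral

variable {α : Type*} [MeasurableSpace α] {μ : Measure α} {Φ : α → ℝ → ℝ → ℝ}

lemma integrable_leftRightForm (hA : A.IsHermitian) (hB : B.IsHermitian)
    (h : ∀ x ∈ spectrum ℝ A, ∀ y ∈ spectrum ℝ B, Integrable (fun t => Φ t x y) μ)
    (K : Matrix m n 𝕜) : Integrable (fun t => leftRightForm hA hB (Φ t) K) μ :=
  integrable_finsetSum _ fun i _ => integrable_finsetSum _ fun j _ =>
    (h _ (hA.eigenvalues_mem_spectrum_real i) _ (hB.eigenvalues_mem_spectrum_real j)).mul_const _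

lemma integral_leftRightForm (hA : A.IsHermitian) (hB : B.IsHermitian)
    (h : ∀ x ∈ spectrum ℝ A, ∀ y ∈ spectrum ℝ B, Integrable (fun t => Φ t x y) μ)
    (hφ : ∀ x ∈ spectrum ℝ A, ∀ y ∈ spectrum ℝ B, ∫ t, Φ t x y ∂μ = φ x y) (K : Matrix m n 𝕜) :
    ∫ t, leftRightForm hA hB (Φ t) K ∂μ = leftRightForm hA hB φ K := by
  have hint i j := (h _ (hA.eigenvalues_mem_spectrum_real i) _
    (hB.eigenvalues_mem_spectrum_real j)).mul_const (‖((hA.eigenvectorUnitary : Matrix m m 𝕜)ᴴ *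
      K * (hB.eigenvectorUnitary : Matrix n n 𝕜)) i j‖ ^ 2)
  have hval i j := hφ _ (hA.eigenvalues_mem_spectrum_real i) _ (hB.eigenvalues_mem_spectrum_real j)
  simp only [leftRightForm]
  rw [integral_finsetSum _ fun i _ => integrable_finsetSum _ fun j _ => hint i j]
  simp only [integral_finsetSum _ fun j _ => hint _ j, integral_mul_const, hval]

end Integral

end LeftRightForm

section TraceInequalities

open MeasureTheory

variable {𝕜 n : Type*} [RCLike 𝕜] {A B C W X Y : Matrix n n 𝕜}

lemma posDef_of_one_le [DecidableEq n] (hX : 1 ≤ X) : X.PosDef := by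
  simpa using PosDef.one.add_posSemidef (le_iff.1 hX)

variable [Fintype n]

lemma re_trace_mul_nonneg (hA : A.PosSemidef) (hB : B.PosSemidef) :
    0 ≤ RCLike.re (A * B).trace := by
  classical
  obtain ⟨S, rfl⟩ := CStarAlgebra.nonneg_iff_eq_star_mul_self.1 hA.nonneg
  rw [Matrix.mul_assoc, Matrix.trace_mul_comm]
  exact (RCLike.nonneg_iff.1 (hB.mul_mul_conjTranspose_same S).trace_nonneg).1

variable [DecidableEq n]

lemma leftRightForm_mul_one (hA : A.IsHermitian) (hB : B.IsHermitian) (f g : ℝ → ℝ) :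
    leftRightForm hA hB (fun x y => f x * g y) 1 = RCLike.re (cfc f A * cfc g B).trace := by
  rw [leftRightForm_mul, conjTranspose_one, Matrix.one_mul, Matrix.mul_one]

lemma cfc_mul_cfc_self (A : Matrix n n 𝕜) (f g : ℝ → ℝ) :
    cfc f A * cfc g A = cfc (fun x => f x * g x) A :=
  (cfc_mul f g A (finite_real_spectrum.continuousOn f) (finite_real_spectrum.continuousOn g)).symm

lemma conjTranspose_cfc (A : Matrix n n 𝕜) (f : ℝ → ℝ) : (cfc f A)ᴴ = cfc f A :=
  (cfc_predicate f A : IsSelfAdjoint (cfc f A))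

lemma leftRightForm_left_cfc (hA : A.IsHermitian) (hB : B.IsHermitian) (hC : C.IsHermitian)
    (f g : ℝ → ℝ) :
    leftRightForm hA hB (fun x _ => f x) (cfc g C) =
      leftRightForm hA hC (fun x z => f x * g z ^ 2) 1 := by
  have h := leftRightForm_mul hA hB f (fun _ => 1) (cfc g C)
  rw [cfc_const_one ℝ B (ha := hB.isSelfAdjoint), Matrix.mul_one, conjTranspose_cfc,
    Matrix.mul_assoc, Matrix.trace_mul_comm, Matrix.mul_assoc, cfc_mul_cfc_self] at h
  simpa only [leftRightForm_mul_one, mul_one, sq] using h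

lemma leftRightForm_right_cfc (hA : A.IsHermitian) (hB : B.IsHermitian) (hC : C.IsHermitian)
    (f g : ℝ → ℝ) :
    leftRightForm hA hB (fun _ y => f y) (cfc g C) =
      leftRightForm hC hB (fun z y => g z ^ 2 * f y) 1 := by
  have h := leftRightForm_mul hA hB (fun _ => 1) f (cfc g C)
  rw [cfc_const_one ℝ A (ha := hA.isSelfAdjoint), Matrix.mul_one, conjTranspose_cfc,
    cfc_mul_cfc_self] at h
  simpa only [leftRightForm_mul_one, one_mul, sq] using h

lemma mul_rpowIntegrand₀₁_div {t w y : ℝ} (s : ℝ) (ht : 0 < t) (hw : 0 ≤ w) (hy : 0 ≤ y) :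
    y * Real.rpowIntegrand₀₁ s t (w / y) =
      t ^ s / t ^ 2 * w * (t ^ s / t * y) / (t ^ s / t ^ 2 * w + t ^ s / t * y) := by
  rcases hy.eq_or_lt with rfl | hy
  · simp only [zero_mul, mul_zero, zero_div]
  have : 0 < t ^ s := Real.rpow_pos_of_pos ht s
  unfold Real.rpowIntegrand₀₁
  field_simp
  ring

-- The left-hand kernel is a parallel sum of a multiple of `w` and a multiple of `y`, so each
-- decomposition `1 = P + Q` bounds its form; the one used is optimal for `W = X` and `Y = 1`.
lemma leftRightForm_rpowIntegrand₀₁_le {t : ℝ} (s : ℝ) (ht : 0 < t) (hW : W.PosSemidef)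
    (hX : X.PosSemidef) (hY : Y.PosSemidef) :
    leftRightForm hW.1 hY.1 (fun w y => y * Real.rpowIntegrand₀₁ s t (w / y)) 1 ≤
      leftRightForm hW.1 hX.1 (fun w x => w * rpowIntegrandDeriv s t x) 1 +
        leftRightForm hX.1 hY.1
          (fun x y => (Real.rpowIntegrand₀₁ s t x - x * rpowIntegrandDeriv s t x) * y) 1 := by
  have hw := spectrum_nonneg_of_nonneg (𝕜 := ℝ) hW.nonneg
  have hx := spectrum_nonneg_of_nonneg (𝕜 := ℝ) hX.nonneg
  have hy := spectrum_nonneg_of_nonneg (𝕜 := ℝ) hY.nonneg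
  set P := cfc (fun x => t / (t + x)) X with hP
  set Q := cfc (fun x => x / (t + x)) X with hQ
  have one_eq : (1 : Matrix n n 𝕜) = P + Q := by
    rw [hP, hQ, ← cfc_add X _ _ (finite_real_spectrum.continuousOn _)
      (finite_real_spectrum.continuousOn _), ← cfc_const_one ℝ X (ha := hX.1.isSelfAdjoint)]
    refine cfc_congr fun x h => ?_
    have := hx h
    field_simp
  calc leftRightForm hW.1 hY.1 (fun w y => y * Real.rpowIntegrand₀₁ s t (w / y)) 1
      = leftRightForm hW.1 hY.1 (fun w y => t ^ s / t ^ 2 * w * (t ^ s / t * y) /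
          (t ^ s / t ^ 2 * w + t ^ s / t * y)) (P + Q) := by
        rw [← one_eq]
        exact leftRightForm_congr _ _
          (fun w h y h' => mul_rpowIntegrand₀₁_div s ht (hw h) (hy h')) 1
    _ ≤ leftRightForm hW.1 hY.1 (fun w _ => t ^ s / t ^ 2 * w) P +
          leftRightForm hW.1 hY.1 (fun _ y => t ^ s / t * y) Q :=
        leftRightForm_mul_div_add_le _ _ (fun w h _ _ => by have := hw h; positivity)
          (fun _ _ y h => by have := hy h; positivity) P Q
    _ = _ := by
        rw [leftRightForm_left_cfc hW.1 hY.1 hX.1, leftRightForm_right_cfc hW.1 hY.1 hX.1]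
        congr 1 <;> refine leftRightForm_congr _ _ (fun a ha b hb => ?_) 1
        · have := hx hb
          unfold rpowIntegrandDeriv
          field_simp
        · rw [rpowIntegrand₀₁_sub_mul_rpowIntegrandDeriv s ht (hx ha)]
          ring

lemma leftRightForm_rpow_mul_rpow_le {s : ℝ} (hs : s ∈ Set.Ioo 0 1) (hW : W.PosSemidef)
    (hX : X.PosDef) (hY : Y.PosSemidef) :
    leftRightForm hW.1 hY.1 (fun w y => w ^ s * y ^ (1 - s)) 1 ≤
      leftRightForm hW.1 hX.1 (fun w x => w * (s * x ^ (s - 1))) 1 +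
        leftRightForm hX.1 hY.1 (fun x y => (1 - s) * x ^ s * y) 1 := by
  have hw := spectrum_nonneg_of_nonneg (𝕜 := ℝ) hW.nonneg
  have hx : ∀ x ∈ spectrum ℝ X, 0 < x := fun x h => hX.isStrictlyPositive.spectrum_pos h
  have hy := spectrum_nonneg_of_nonneg (𝕜 := ℝ) hY.nonneg
  obtain ⟨μ, hμ₀⟩ := Real.exists_measure_rpow_eq_integral_rpowIntegrand₀₁ hs
  have hμ y (h : 0 < y) := hμ₀ y h.le
  have hderiv x (h : x ∈ spectrum ℝ X) :=
    integrableOn_rpowIntegrandDeriv (hx x h) (hμ x (hx x h)).1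
  have hint₁ : ∀ w ∈ spectrum ℝ W, ∀ y ∈ spectrum ℝ Y,
      IntegrableOn (fun t => y * Real.rpowIntegrand₀₁ s t (w / y)) (Set.Ioi 0) μ :=
    fun w h y h' => (hμ₀ _ (div_nonneg (hw h) (hy h'))).1.const_mul y
  have hint₂ : ∀ w ∈ spectrum ℝ W, ∀ x ∈ spectrum ℝ X,
      IntegrableOn (fun t => w * rpowIntegrandDeriv s t x) (Set.Ioi 0) μ :=
    fun w _ x h => (hderiv x h).const_mul w
  have hint₃ : ∀ x ∈ spectrum ℝ X, ∀ y ∈ spectrum ℝ Y, IntegrableOn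
      (fun t => (Real.rpowIntegrand₀₁ s t x - x * rpowIntegrandDeriv s t x) * y) (Set.Ioi 0) μ :=
    fun x h y _ => ((hμ x (hx x h)).1.sub ((hderiv x h).const_mul x)).mul_const y
  have hform₂ := integrable_leftRightForm hW.1 hX.1 hint₂ 1
  have hform₃ := integrable_leftRightForm hX.1 hY.1 hint₃ 1
  rw [← integral_leftRightForm _ _ hint₁ fun w h y h' => ?value₁,
    ← integral_leftRightForm _ _ hint₂ fun w _ x h => ?value₂,
    ← integral_leftRightForm _ _ hint₃ fun x h y _ => ?value₃, ← integral_add hform₂ hform₃]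
  · exact setIntegral_mono_on (integrable_leftRightForm _ _ hint₁ 1) (hform₂.add hform₃)
      measurableSet_Ioi fun t ht => leftRightForm_rpowIntegrand₀₁_le s ht hW hX.posSemidef hY
  case value₁ =>
    rw [integral_const_mul, ← (hμ₀ _ (div_nonneg (hw h) (hy h'))).2,
      mul_div_rpow_eq_rpow_mul_rpow hs.2 (hw h) (hy h')]
  case value₂ => rw [integral_const_mul, integral_rpowIntegrandDeriv (hx x h) hμ]
  case value₃ =>
    rw [integral_mul_const, integral_rpowIntegrand₀₁_sub_mul_rpowIntegrandDeriv (hx x h) hμ]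

lemma re_trace_rpow_mul_rpow_le {s : ℝ} (hs : s ∈ Set.Icc 0 1) (hW : W.PosSemidef)
    (hX : X.PosDef) (hY : Y.PosSemidef) :
    RCLike.re (W ^ s * Y ^ (1 - s)).trace ≤
      s * RCLike.re (W * X ^ (s - 1)).trace + (1 - s) * RCLike.re (X ^ s * Y).trace := by
  rcases Set.eq_endpoints_or_mem_Ioo_of_mem_Icc hs with rfl | rfl | hs'
  · simp [CFC.rpow_zero _ hW.nonneg, CFC.rpow_zero _ hX.posSemidef.nonneg,
      CFC.rpow_one _ hY.nonneg]
  · simp [CFC.rpow_one _ hW.nonneg, CFC.rpow_zero _ hX.posSemidef.nonneg,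
      CFC.rpow_zero _ hY.nonneg]
  have hle := leftRightForm_rpow_mul_rpow_le hs' hW hX hY
  simp only [mul_left_comm _ s, mul_assoc (1 - s), leftRightForm_const_mul] at hle
  simpa only [leftRightForm_mul_one, CFC.rpow_eq_cfc_real hW.nonneg, cfc_id' ℝ W hW.1.isSelfAdjoint,
    CFC.rpow_eq_cfc_real hX.posSemidef.nonneg, CFC.rpow_eq_cfc_real hY.nonneg,
    cfc_id' ℝ Y hY.1.isSelfAdjoint] using hle

lemma rpow_le_tangent {s w x : ℝ} (hs : s ∈ Set.Icc 0 1) (hw : 0 ≤ w) (hx : 0 < x) :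
    w ^ s ≤ s * (w * x ^ (s - 1)) + (1 - s) * x ^ s := by
  have amgm := Real.geom_mean_le_arith_mean2_weighted hs.1 (sub_nonneg.2 hs.2)
    (div_nonneg hw hx.le) zero_le_one (add_sub_cancel s 1)
  rw [Real.one_rpow, mul_one, mul_one, Real.div_rpow hw hx.le,
    div_le_iff₀ (Real.rpow_pos_of_pos hx s)] at amgm
  rw [Real.rpow_sub_one hx.ne']
  linarith [show (s * (w / x) + (1 - s)) * x ^ s = s * (w * (x ^ s / x)) + (1 - s) * x ^ s by ring]

lemma re_trace_rpow_mul_cfc_le {s : ℝ} (hs : s ∈ Set.Icc 0 1) (hW : W.PosSemidef)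
    (hX : X.PosDef) {g : ℝ → ℝ} (hg : ∀ x ∈ spectrum ℝ X, 0 ≤ g x) :
    RCLike.re (W ^ s * cfc g X).trace ≤ s * RCLike.re (W * (X ^ (s - 1) * cfc g X)).trace +
      (1 - s) * RCLike.re (X ^ s * cfc g X).trace := by
  have hle := leftRightForm_mono hW.1 hX.1 (φ := fun w x => w ^ s * g x)
    (ψ := fun w x => s * (w * (x ^ (s - 1) * g x)) + (1 - s) * (1 * (x ^ s * g x)))
    (fun w hw x hx => by
      have tangent := rpow_le_tangent hs (spectrum_nonneg_of_nonneg hW.nonneg hw)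
        (hX.isStrictlyPositive.spectrum_pos hx)
      linarith [mul_le_mul_of_nonneg_right tangent (hg x hx)]) 1
  rw [leftRightForm_add, leftRightForm_const_mul, leftRightForm_const_mul] at hle
  simpa only [leftRightForm_mul_one, CFC.rpow_eq_cfc_real hW.nonneg, cfc_id' ℝ W hW.1.isSelfAdjoint,
    CFC.rpow_eq_cfc_real hX.posSemidef.nonneg, cfc_const_one ℝ W hW.1.isSelfAdjoint,
    Matrix.one_mul, cfc_mul_cfc_self] using hle

lemma rpow_le_self_of_one_le {s : ℝ} (hs : s ≤ 1) (hX : 1 ≤ X) : X ^ s ≤ X := by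
  have hX₀ : 0 ≤ X := zero_le_one.trans hX
  have hspec : ∀ x ∈ spectrum ℝ X, 1 ≤ x := (CFC.one_le_iff X).1 hX
  calc X ^ s = cfc (fun x : ℝ => x ^ s) X := CFC.rpow_eq_cfc_real hX₀
    _ ≤ cfc (fun x : ℝ => x) X := cfc_mono
        (fun x hx => Real.rpow_le_self_of_one_le (hspec x hx) hs)
        (finite_real_spectrum.continuousOn _)
    _ = X := cfc_id' ℝ X

lemma re_trace_rpow_mul_rpow_sub_one_le {s : ℝ} (hs : s ∈ Set.Icc 0 1) (hW : W.PosSemidef)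
    (hX : 1 ≤ X) :
    RCLike.re (W ^ s * (X ^ (1 - s) - 1)).trace ≤
      s * (RCLike.re W.trace - RCLike.re (W * X ^ (s - 1)).trace) +
        (1 - s) * (RCLike.re X.trace - RCLike.re (X ^ s).trace) := by
  have hXpos := posDef_of_one_le hX
  have hunit : IsUnit X := hXpos.isStrictlyPositive.isUnit
  have hg : X ^ (1 - s) - 1 = cfc (fun x : ℝ => x ^ (1 - s) - 1) X := by
    rw [cfc_sub _ _ X (finite_real_spectrum.continuousOn _) (finite_real_spectrum.continuousOn _),
      cfc_const_one ℝ X hXpos.1.isSelfAdjoint, CFC.rpow_eq_cfc_real hXpos.posSemidef.nonneg]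
  have hg_nonneg : ∀ x ∈ spectrum ℝ X, 0 ≤ x ^ (1 - s) - 1 := fun x hx =>
    sub_nonneg.2 (Real.one_le_rpow ((CFC.one_le_iff X).1 hX x hx) (sub_nonneg.2 hs.2))
  have hle := re_trace_rpow_mul_cfc_le hs hW hXpos hg_nonneg
  rwa [← hg, mul_sub (X ^ (s - 1)), mul_sub (X ^ s), ← CFC.rpow_add hunit, ← CFC.rpow_add hunit,
    sub_add_sub_cancel, sub_self, add_sub_cancel, CFC.rpow_zero X hXpos.posSemidef.nonneg,
    CFC.rpow_one X hXpos.posSemidef.nonneg, mul_one, mul_one, mul_sub W, mul_one, trace_sub W,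
    trace_sub X, map_sub, map_sub] at hle

theorem re_trace_le_re_trace_mul_of_rpow_eq {s : ℝ} (hs : s ∈ Set.Ico 0 1) (hW : W.PosDef)
    (hX : 1 ≤ X) (hY : 1 ≤ Y) (h : W ^ (1 - s) = X ^ (1 - s) + Y ^ (1 - s) - 1) :
    RCLike.re W.trace ≤ RCLike.re (X * Y).trace := by
  have hs' := Set.Ico_subset_Icc_self hs
  have W_eq : W = W ^ s * (X ^ (1 - s) - 1) + W ^ s * Y ^ (1 - s) := by
    rw [← mul_add, sub_add_eq_add_sub, ← h, ← CFC.rpow_add hW.isStrictlyPositive.isUnit,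
      add_sub_cancel, CFC.rpow_one W hW.posSemidef.nonneg]
  have upper : RCLike.re W.trace ≤ s * RCLike.re W.trace +
      (1 - s) * (RCLike.re X.trace - RCLike.re (X ^ s).trace + RCLike.re (X ^ s * Y).trace) :=
    calc RCLike.re W.trace = RCLike.re (W ^ s * (X ^ (1 - s) - 1)).trace +
          RCLike.re (W ^ s * Y ^ (1 - s)).trace := by rw [← map_add, ← trace_add, ← W_eq]
      _ ≤ _ := add_le_add (re_trace_rpow_mul_rpow_sub_one_le hs' hW.posSemidef hX)
          (re_trace_rpow_mul_rpow_le hs' hW.posSemidef (posDef_of_one_le hX)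
            (posDef_of_one_le hY).posSemidef)
      _ = _ := by ring
  have gap : 0 ≤ RCLike.re ((X - X ^ s) * (Y - 1)).trace :=
    re_trace_mul_nonneg (le_iff.1 (rpow_le_self_of_one_le hs'.2 hX)) (le_iff.1 hY)
  rw [sub_mul, mul_sub, mul_sub, mul_one, mul_one, trace_sub, trace_sub, trace_sub, map_sub,
    map_sub, map_sub] at gap
  refine le_of_mul_le_mul_left ?_ (sub_pos.2 hs.2)
  calc (1 - s) * RCLike.re W.trace
      ≤ (1 - s) * (RCLike.re X.trace - RCLike.re (X ^ s).trace + RCLike.re (X ^ s * Y).trace) := by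
        linarith
    _ ≤ (1 - s) * RCLike.re (X * Y).trace :=
        mul_le_mul_of_nonneg_left (by linarith) (sub_nonneg.2 hs'.2)

end TraceInequalities

section DeformedExponential

lemma one_le_expq {q x : ℝ} (hq : 1 < q) (hx : 0 ≤ x) : 1 ≤ expq q x := by
  have := sub_pos.2 hq
  rw [expq, if_neg hq.ne']
  exact Real.one_le_rpow (le_add_of_nonneg_right (by positivity)) (by positivity)

lemma expq_rpow {q x : ℝ} (hq : 1 < q) (hx : 0 ≤ x) : expq q x ^ (q - 1) = 1 + (q - 1) * x := by
  have hq' := sub_pos.2 hq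
  rw [expq, if_neg hq.ne', one_div, Real.rpow_inv_rpow (by positivity) hq'.ne']

variable {𝕜 n : Type*} [RCLike 𝕜] [Fintype n] [DecidableEq n] {q : ℝ} {A B : Matrix n n 𝕜}

lemma one_le_cfc_expq (hq : 1 < q) (hA : A.PosSemidef) : 1 ≤ cfc (expq q) A :=
  one_le_cfc (expq q) A (fun _ hx => one_le_expq hq (spectrum_nonneg_of_nonneg hA.nonneg hx))
    (finite_real_spectrum.continuousOn _) hA.1.isSelfAdjoint

lemma cfc_expq_rpow (hq : 1 < q) (hA : A.PosSemidef) :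
    cfc (expq q) A ^ (q - 1) = 1 + (q - 1) • A := by
  have hspec := spectrum_nonneg_of_nonneg (𝕜 := ℝ) hA.nonneg
  calc cfc (expq q) A ^ (q - 1) = cfc (fun x => expq q x ^ (q - 1)) A :=
        CFC.cfc_rpow (fun x hx => one_pos.trans_le (one_le_expq hq (hspec hx)))
          (finite_real_spectrum.continuousOn _) hA.1.isSelfAdjoint
    _ = cfc (fun x => 1 + (q - 1) * x) A := cfc_congr fun x hx => expq_rpow hq (hspec hx)
    _ = 1 + (q - 1) • A := by
        rw [cfc_const_add 1 _ A, cfc_const_mul_id (q - 1) A, map_one]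

theorem stmt16_general (hq : q ∈ Set.Ioc (1 : ℝ) 2) (hA : A.PosSemidef) (hB : B.PosSemidef) :
    RCLike.re (cfc (expq q) (A + B)).trace ≤
      RCLike.re (cfc (expq q) A * cfc (expq q) B).trace := by
  have hexp : (1 : ℝ) - (2 - q) = q - 1 := by ring
  refine re_trace_le_re_trace_mul_of_rpow_eq (s := 2 - q)
    ⟨sub_nonneg.2 hq.2, by linarith [hq.1]⟩
    (posDef_of_one_le (one_le_cfc_expq hq.1 (hA.add hB)))
    (one_le_cfc_expq hq.1 hA) (one_le_cfc_expq hq.1 hB) ?_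
  rw [hexp, cfc_expq_rpow hq.1 (hA.add hB), cfc_expq_rpow hq.1 hA, cfc_expq_rpow hq.1 hB, smul_add]
  abel

end DeformedExponential

/-- Deformed Golden–Thompson inequality for q ∈ (1,2] and positive semidefinite A, B. -/
theorem stmt16 {n : ℕ} (q : ℝ) (hq : q ∈ Set.Ioc (1 : ℝ) 2)
    (A B : Matrix (Fin n) (Fin n) ℂ) (hA : A.PosSemidef) (hB : B.PosSemidef) :
    trRe (mexpq q (A + B)) ≤ trRe (mexpq q A * mexpq q B) :=
  stmt16_general hq hA hB
end

section
/- Let A and B be n×n positive definite matrices, let H be an invertible n×n contraction (H*H ≤ I), let q ∈ [0,2] with q ≠ 1, and let p ≥ |q−1|. Then S_{H,q}(A | B) − (1/(q−1)) Tr[(H H* − I) A^{2−q}] + Tr(A − B) ≤ − Tr[ A · log_q( { A^{−p/2} (H B^{q−1} H*)^{p/(q−1)} A^{−p/2} }^{1/p} ) ]. -/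
open Matrix ComplexOrder

/-!
Expanding the deformed logarithms and using cyclicity of the trace, the claim becomes a weighted
Araki–Lieb–Thirring inequality: for `0 < α ≤ 1` and `0 ≤ β`,
`Tr D^(β + α) (D^(-1/2) Z D^(-1/2))^α ≤ Tr D^β Z^α`,
with `D = A^p`, `Z = (H B^(q-1) H*)^(p/(q-1))` and `α = (q-1)/p`. When `q < 1` one has `α < 0` and
the inequality, applied to the inverse of `D^(-1/2) Z D^(-1/2)`, comes out reversed, which the
factor `1/(q-1)` compensates.

To prove it, diagonalise `D` and lower the exponent of `D` in `D^(-1/2) Z D^(-1/2)` in small steps.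
In each step the integral representation of `x ^ α` reduces the comparison to resolvents
`(t + Z)⁻¹`. These satisfy the variational bound `V + V* - V* X V ≤ X⁻¹`; the errors left by
suitable trial matrices `V` add up, over the diagonal entries, to a symmetric double sum that is
nonnegative by Chebyshev's argument.
-/

section CStarAlgebra

open MeasureTheory Real Set

variable {𝓐 : Type*} [CStarAlgebra 𝓐] [PartialOrder 𝓐] [StarOrderedRing 𝓐]

theorem cfcₙ_rpowIntegrand₀₁_eq_sub {a : 𝓐} (ha : 0 ≤ a) {α t : ℝ} (hα : α ∈ Ioo 0 1)
    (ht : 0 < t) : cfcₙ (rpowIntegrand₀₁ α t) a =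
      algebraMap ℝ 𝓐 (t ^ (α - 1)) - t ^ α • Ring.inverse (algebraMap ℝ 𝓐 t + a) := by
  have hne : ∀ r ∈ spectrum ℝ a, t + r ≠ 0 := fun r hr =>
    (add_pos_of_pos_of_nonneg ht (spectrum_nonneg_of_nonneg ha hr)).ne'
  have hinv : ContinuousOn (fun r : ℝ => (t + r)⁻¹) (spectrum ℝ a) :=
    (continuousOn_const.add continuousOn_id).inv₀ hne
  have hcfc : cfcₙ (rpowIntegrand₀₁ α t) a = cfc (rpowIntegrand₀₁ α t) a :=
    cfcₙ_eq_cfc ((continuousOn_rpowIntegrand₀₁_Ici hα ht).mono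
      (quasispectrum_nonneg_of_nonneg a ha)) rpowIntegrand₀₁_zero_right
  rw [hcfc, rpowIntegrand₀₁_eq_sub hα.2.ne ht,
    cfc_sub (fun _ : ℝ => t ^ (α - 1)) (fun r : ℝ => t ^ α * (t + r)⁻¹) a continuousOn_const
      (continuousOn_const.mul hinv), cfc_const .., cfc_const_mul _ _ _ hinv,
    cfc_inv _ _ hne .., cfc_const_add .., cfc_id' ..]

theorem sum_rpow_le_sum_rpow_of_resolvent {ι : Type*} [Fintype ι] (Λ : ι → 𝓐 →L[ℝ] ℝ)
    {a b : ι → 𝓐} (ha : ∀ k, 0 ≤ a k) (hb : ∀ k, 0 ≤ b k) {α : ℝ} (hα : α ∈ Ioo 0 1)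
    (h : ∀ t : ℝ, 0 < t → ∑ k, Λ k (Ring.inverse (algebraMap ℝ 𝓐 t + b k)) ≤
      ∑ k, Λ k (Ring.inverse (algebraMap ℝ 𝓐 t + a k))) :
    ∑ k, Λ k (a k ^ α) ≤ ∑ k, Λ k (b k ^ α) := by
  lift α to NNReal using hα.1.le
  obtain ⟨μ, hμ⟩ := CFC.exists_measure_nnrpow_eq_integral_cfcₙ_rpowIntegrand₀₁ 𝓐
    (show α ∈ Ioo 0 1 from mod_cast hα)
  have hint (x : ι → 𝓐) (hx : ∀ k, 0 ≤ x k) (k : ι) (_ : k ∈ Finset.univ) :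
      Integrable (fun t => Λ k (cfcₙ (rpowIntegrand₀₁ α t) (x k))) (μ.restrict (Ioi 0)) :=
    (Λ k).integrable_comp (hμ (x k) (hx k)).1
  have hrepr (x : ι → 𝓐) (hx : ∀ k, 0 ≤ x k) : ∑ k, Λ k (x k ^ (α : ℝ)) =
      ∫ t in Ioi 0, ∑ k, Λ k (cfcₙ (rpowIntegrand₀₁ α t) (x k)) ∂μ := by
    rw [integral_finsetSum _ (hint x hx)]
    refine Finset.sum_congr rfl fun k _ => ?_
    rw [(Λ k).integral_comp_comm (hμ (x k) (hx k)).1, ← (hμ (x k) (hx k)).2,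
      CFC.nnrpow_eq_rpow (mod_cast hα.1)]
  rw [hrepr a ha, hrepr b hb]
  refine setIntegral_mono_on (integrable_finsetSum _ (hint a ha))
    (integrable_finsetSum _ (hint b hb)) measurableSet_Ioi fun t (ht : 0 < t) => ?_
  simp only [cfcₙ_rpowIntegrand₀₁_eq_sub (ha _) hα ht, cfcₙ_rpowIntegrand₀₁_eq_sub (hb _) hα ht,
    map_sub, map_smul, smul_eq_mul, Finset.sum_sub_distrib, ← Finset.mul_sum]
  exact sub_le_sub_left (mul_le_mul_of_nonneg_left (h t ht) (rpow_nonneg ht.le _)) _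

end CStarAlgebra

theorem sum_mul_mul_sub_nonneg {ι R : Type*} [Fintype ι] [CommRing R] [LinearOrder R]
    [IsStrictOrderedRing R] {s : ι → ι → R} {f g : ι → R} (hsymm : ∀ i j, s i j = s j i)
    (hs : ∀ i j, 0 ≤ s i j) (hfg : Monovary f g) : 0 ≤ ∑ i, ∑ j, s i j * f i * (g i - g j) := by
  have hswap : ∑ i, ∑ j, s i j * f i * (g i - g j) = ∑ i, ∑ j, s i j * f j * (g j - g i) := by
    rw [Finset.sum_comm]
    simp only [hsymm]
  have hsum : ∑ i, ∑ j, s i j * f i * (g i - g j) + ∑ i, ∑ j, s i j * f j * (g j - g i) =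
      ∑ i, ∑ j, s i j * ((f j - f i) * (g j - g i)) := by
    simp only [← Finset.sum_add_distrib]
    exact Finset.sum_congr rfl fun i _ => Finset.sum_congr rfl fun j _ => by ring
  have hnonneg : 0 ≤ ∑ i, ∑ j, s i j * ((f j - f i) * (g j - g i)) :=
    Finset.sum_nonneg fun i _ => Finset.sum_nonneg fun j _ =>
      mul_nonneg (hs i j) (monovary_iff_forall_mul_nonneg.1 hfg i j)
  linarith

section Matrix

open scoped MatrixOrder Matrix.Norms.L2Operator

variable {m : Type*}

theorem re_diag_mono {X Y : Matrix m m ℂ} (h : X ≤ Y) (i : m) :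
    (X i i).re ≤ (Y i i).re := by
  have hdiag : 0 ≤ (Y - X) i i := (Matrix.le_iff.1 h).diag_nonneg
  simpa using (Complex.le_def.1 hdiag).1

theorem isHermitian_diagonal_ofReal [DecidableEq m] (e : m → ℝ) :
    (diagonal fun i => (e i : ℂ)).IsHermitian :=
  isHermitian_diagonal_of_self_adjoint _ (funext fun _ => Complex.conj_ofReal _)

theorem posDef_smul_one_add [DecidableEq m] {Z : Matrix m m ℂ} (hZ : 0 ≤ Z) {t : ℝ}
    (ht : 0 < t) : (t • 1 + Z).PosDef :=
  (PosDef.one.smul ht).add_posSemidef (nonneg_iff_posSemidef.1 hZ)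

/-- The real part of the `i`-th diagonal entry, as a continuous linear functional. -/
noncomputable def reDiagCLM [Fintype m] (i : m) : Matrix m m ℂ →L[ℝ] ℝ :=
  (Complex.reLm ∘ₗ entryLinearMap ℝ ℂ i i).toContinuousLinearMap

variable [Fintype m] [DecidableEq m]

theorem re_mul_diagonal_mul_apply_self {R : Matrix m m ℂ} (hR : R.IsHermitian) (x : m → ℝ)
    (i : m) :
    ((R * diagonal (fun j => (x j : ℂ)) * R) i i).re = ∑ j, Complex.normSq (R i j) * x j := by
  rw [mul_apply, Complex.re_sum]
  refine Finset.sum_congr rfl fun j _ => ?_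
  rw [mul_diagonal, ← hR.apply j i, mul_right_comm, Complex.star_def, Complex.mul_conj]
  norm_cast

theorem add_conjTranspose_sub_le_inv {X : Matrix m m ℂ} (hX : X.PosDef) (V : Matrix m m ℂ) :
    V + Vᴴ - Vᴴ * X * V ≤ X⁻¹ := by
  have hdet : IsUnit X.det := X.isUnit_iff_isUnit_det.1 hX.isUnit
  have hsq : (1 - X * V)ᴴ * X⁻¹ * (1 - X * V) = X⁻¹ - (V + Vᴴ - Vᴴ * X * V) := by
    rw [conjTranspose_sub, conjTranspose_one, conjTranspose_mul, hX.1.eq]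
    simp only [sub_mul, mul_sub, one_mul, mul_one, Matrix.mul_assoc, mul_nonsing_inv _ hdet,
      nonsing_inv_mul_cancel_left _ _ hdet]
    abel
  rw [Matrix.le_iff, ← hsq]
  exact hX.inv.posSemidef.conjTranspose_mul_mul_same _

/-- The resolvent of `Z` at `-t`, with the sign that makes it positive definite when `0 ≤ Z` and
`0 < t`. -/
noncomputable def posResolvent (t : ℝ) (Z : Matrix m m ℂ) : Matrix m m ℂ := (t • 1 + Z)⁻¹

theorem isHermitian_posResolvent {Z : Matrix m m ℂ} (hZ : Z.IsHermitian) (t : ℝ) :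
    (posResolvent t Z).IsHermitian :=
  ((isHermitian_one.smul (IsSelfAdjoint.all t)).add hZ).inv

theorem posResolvent_mul_mul_posResolvent {Z : Matrix m m ℂ} (hZ : 0 ≤ Z) {t : ℝ} (ht : 0 < t) :
    posResolvent t Z * Z * posResolvent t Z =
      posResolvent t Z - t • (posResolvent t Z * posResolvent t Z) := by
  have hinv : posResolvent t Z * (t • 1 + Z) * posResolvent t Z = posResolvent t Z := by
    rw [posResolvent,
      nonsing_inv_mul _ ((isUnit_iff_isUnit_det _).1 (posDef_smul_one_add hZ ht).isUnit), one_mul]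
  rw [mul_add, add_mul, mul_smul_comm, mul_one, smul_mul_assoc] at hinv
  exact eq_sub_of_add_eq' hinv

theorem trial_le_posResolvent_sq_smul {W S : Matrix m m ℂ} (hW : 0 ≤ W) (hS : S.IsHermitian)
    {c t : ℝ} (hc : c ≠ 0) (ht : 0 < t) {R : Matrix m m ℂ} (hR : R = posResolvent t (S * W * S)) :
    c⁻¹ • (S * R + R * S) - R + t • (R * (1 - (c ^ 2)⁻¹ • (S * S)) * R) ≤
      posResolvent t (c ^ 2 • W) := by
  have hZ : 0 ≤ S * W * S := hS.isSelfAdjoint.conjugate_nonneg hW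
  have hRH : Rᴴ = R := hR ▸ isHermitian_posResolvent (nonneg_iff_posSemidef.1 hZ).1 t
  have hRZR : R * (S * W * S) * R = R - t • (R * R) :=
    hR ▸ posResolvent_mul_mul_posResolvent hZ ht
  have hquad : (c⁻¹ • (S * R))ᴴ * (t • 1 + c ^ 2 • W) * (c⁻¹ • (S * R)) =
      R - t • (R * (1 - (c ^ 2)⁻¹ • (S * S)) * R) :=
    calc (c⁻¹ • (S * R))ᴴ * (t • 1 + c ^ 2 • W) * (c⁻¹ • (S * R))
        = (t * (c ^ 2)⁻¹) • (R * (S * S) * R) + R * (S * W * S) * R := by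
          have hcc : c⁻¹ * c⁻¹ = (c ^ 2)⁻¹ := by rw [← mul_inv, sq]
          rw [conjTranspose_smul, conjTranspose_mul, hRH, hS.eq, star_trivial, smul_mul_assoc,
            smul_mul_assoc, mul_smul_comm, smul_smul, hcc]
          simp only [mul_add, add_mul, mul_smul_comm, smul_mul_assoc, smul_add, smul_smul,
            mul_one, Matrix.mul_assoc]
          rw [inv_mul_cancel₀ (pow_ne_zero 2 hc), one_smul, mul_comm]
      _ = R - t • (R * (1 - (c ^ 2)⁻¹ • (S * S)) * R) := by
          rw [hRZR]
          simp only [mul_sub, sub_mul, mul_one, mul_smul_comm, smul_mul_assoc, smul_sub,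
            smul_smul]
          abel
  -- The trial matrix `V = c⁻¹ S R` is the optimal one if `S = c`.
  have htrial := add_conjTranspose_sub_le_inv
    (posDef_smul_one_add (smul_nonneg (sq_nonneg c) hW) ht) (c⁻¹ • (S * R))
  rwa [hquad, conjTranspose_smul, conjTranspose_mul, hRH, hS.eq, star_trivial, ← smul_add,
    ← sub_add] at htrial

/-- The congruence `Z ↦ D Z D` by the real diagonal matrix `D` with entries `e`. -/
noncomputable def diagCongr (e : m → ℝ) (Z : Matrix m m ℂ) : Matrix m m ℂ :=
  diagonal (fun i => (e i : ℂ)) * Z * diagonal fun i => (e i : ℂ)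

theorem diagCongr_apply (e : m → ℝ) (Z : Matrix m m ℂ) (i j : m) :
    diagCongr e Z i j = e i * Z i j * e j := by
  rw [diagCongr, mul_diagonal, diagonal_mul]

theorem diagCongr_diagCongr (e f : m → ℝ) (Z : Matrix m m ℂ) :
    diagCongr e (diagCongr f Z) = diagCongr (e * f) Z := by
  ext i j
  simp only [diagCongr_apply, Pi.mul_apply, Complex.ofReal_mul]
  ring

theorem diagCongr_one (Z : Matrix m m ℂ) : diagCongr 1 Z = Z := by
  ext i j
  simp only [diagCongr_apply, Pi.one_apply, Complex.ofReal_one, one_mul, mul_one]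

theorem diagCongr_nonneg (e : m → ℝ) {Z : Matrix m m ℂ} (hZ : 0 ≤ Z) : 0 ≤ diagCongr e Z :=
  (isHermitian_diagonal_ofReal e).isSelfAdjoint.conjugate_nonneg hZ

theorem re_posResolvent_diagCongr_add_le {W : Matrix m m ℂ} (hW : 0 ≤ W) {e : m → ℝ} {t : ℝ}
    (ht : 0 < t) {i : m} (hi : e i ≠ 0) {R : Matrix m m ℂ}
    (hR : R = posResolvent t (diagCongr e W)) :
    (R i i).re + t * ∑ j, Complex.normSq (R i j) * (1 - (e i ^ 2)⁻¹ * e j ^ 2) ≤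
      (posResolvent t (e i ^ 2 • W) i i).re := by
  have hRH : R.IsHermitian :=
    hR ▸ isHermitian_posResolvent (nonneg_iff_posSemidef.1 (diagCongr_nonneg e hW)).1 t
  have hdiag : 1 - (e i ^ 2)⁻¹ • (diagonal (fun j => (e j : ℂ)) * diagonal (fun j => (e j : ℂ))) =
      diagonal fun j => ((1 - (e i ^ 2)⁻¹ * e j ^ 2 : ℝ) : ℂ) := by
    rw [diagonal_mul_diagonal, ← diagonal_one, ← diagonal_smul, diagonal_sub]
    congr 1
    ext j
    simp [sq]
  have htrial :=
    re_diag_mono (trial_le_posResolvent_sq_smul hW (isHermitian_diagonal_ofReal e) hi ht hR) i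
  rw [hdiag, Matrix.add_apply, Matrix.sub_apply, Matrix.smul_apply, Matrix.smul_apply,
    Matrix.add_apply, diagonal_mul, mul_diagonal, mul_comm (R i i), ← two_mul, Complex.add_re,
    Complex.sub_re, Complex.smul_re, Complex.smul_re, re_mul_diagonal_mul_apply_self hRH,
    ← Complex.ofReal_ofNat, Complex.re_ofReal_mul, Complex.re_ofReal_mul, smul_eq_mul,
    smul_eq_mul, mul_left_comm, inv_mul_cancel_left₀ hi] at htrial
  linarith

theorem sum_mul_posResolvent_diagCongr_le {W : Matrix m m ℂ} (hW : 0 ≤ W) {e f : m → ℝ}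
    (he : ∀ i, 0 < e i) (hf : ∀ i, 0 ≤ f i) (hfe : Monovary f e) {t : ℝ} (ht : 0 < t) :
    ∑ i, f i * e i ^ 2 * (posResolvent t (diagCongr e W) i i).re ≤
      ∑ i, f i * e i ^ 2 * (posResolvent t (e i ^ 2 • W) i i).re := by
  set R := posResolvent t (diagCongr e W) with hR
  have hRH : R.IsHermitian :=
    isHermitian_posResolvent (nonneg_iff_posSemidef.1 (diagCongr_nonneg e hW)).1 t
  have hsymm (i j) : Complex.normSq (R i j) = Complex.normSq (R j i) := by
    rw [← hRH.apply, Complex.star_def, Complex.normSq_conj]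
  have hcheb : 0 ≤ ∑ i, ∑ j, Complex.normSq (R i j) * f i * (e i ^ 2 - e j ^ 2) :=
    sum_mul_mul_sub_nonneg hsymm (fun _ _ => Complex.normSq_nonneg _)
      (hfe.pow_right₀ (fun i => (he i).le) 2)
  calc ∑ i, f i * e i ^ 2 * (R i i).re
      ≤ ∑ i, f i * e i ^ 2 * (R i i).re +
          t * ∑ i, ∑ j, Complex.normSq (R i j) * f i * (e i ^ 2 - e j ^ 2) :=
        le_add_of_nonneg_right (mul_nonneg ht.le hcheb)
    _ = ∑ i, f i * e i ^ 2 *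
          ((R i i).re + t * ∑ j, Complex.normSq (R i j) * (1 - (e i ^ 2)⁻¹ * e j ^ 2)) := by
        simp only [mul_add, Finset.sum_add_distrib, Finset.mul_sum]
        congr! 3 with i _ j
        field_simp [(he i).ne']
    _ ≤ ∑ i, f i * e i ^ 2 * (posResolvent t (e i ^ 2 • W) i i).re :=
        Finset.sum_le_sum fun i _ => mul_le_mul_of_nonneg_left
          (re_posResolvent_diagCongr_add_le hW ht (he i).ne' hR)
          (mul_nonneg (hf i) (sq_nonneg _))

theorem smul_rpow {Z : Matrix m m ℂ} (hZ : 0 ≤ Z) {c : ℝ} (hc : 0 ≤ c) (α : ℝ) :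
    (c • Z) ^ α = c ^ α • Z ^ α := by
  have hcont (f : ℝ → ℝ) : ContinuousOn f (spectrum ℝ Z) := finite_real_spectrum.continuousOn f
  rw [CFC.rpow_eq_cfc_real (smul_nonneg hc hZ), CFC.rpow_eq_cfc_real hZ, ← cfc_smul _ _ Z (hcont _),
    ← cfc_comp_smul c (fun x : ℝ => x ^ α) Z ((finite_real_spectrum.image _).continuousOn _)]
  exact cfc_congr fun x hx => Real.mul_rpow hc (spectrum_nonneg_of_nonneg hZ hx)

theorem monovary_rpow {ι : Type*} {d : ι → ℝ} (hd : ∀ i, 0 ≤ d i) {a b : ℝ} (ha : 0 ≤ a)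
    (hb : 0 ≤ b) : Monovary (fun i => d i ^ a) fun i => d i ^ b := fun i j hij =>
  Real.rpow_le_rpow (hd i)
    ((Real.monotoneOn_rpow_Ici_of_exponent_nonneg hb).reflect_lt (hd i) (hd j) hij).le ha

theorem sum_mul_rpow_le_diagCongr {W : Matrix m m ℂ} (hW : 0 ≤ W) {e f : m → ℝ}
    (he : ∀ i, 0 < e i) (hf : ∀ i, 0 ≤ f i) (hfe : Monovary f e) {α : ℝ}
    (hα : α ∈ Set.Ioc (0 : ℝ) 1) :
    ∑ i, f i * e i ^ 2 * (((e i ^ 2 • W) ^ α) i i).re ≤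
      ∑ i, f i * e i ^ 2 * ((diagCongr e W ^ α) i i).re := by
  have heW (i) : 0 ≤ e i ^ 2 • W := smul_nonneg (sq_nonneg _) hW
  obtain ⟨hα₀, rfl | hα₁⟩ := And.imp_right le_iff_eq_or_lt.1 hα
  · refine (Finset.sum_congr rfl fun i _ => ?_).le
    rw [CFC.rpow_one _ (heW i), CFC.rpow_one _ (diagCongr_nonneg e hW), diagCongr_apply,
      mul_right_comm (e i : ℂ), ← Complex.ofReal_mul, ← sq, Complex.re_ofReal_mul,
      Matrix.smul_apply, Complex.smul_re, smul_eq_mul]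
  · refine sum_rpow_le_sum_rpow_of_resolvent (fun i => (f i * e i ^ 2) • reDiagCLM i) heW
      (fun _ => diagCongr_nonneg e hW) ⟨hα₀, hα₁⟩ fun t ht => ?_
    simp only [← nonsing_inv_eq_ringInverse, Algebra.algebraMap_eq_smul_one]
    exact sum_mul_posResolvent_diagCongr_le hW he hf hfe ht

/-- The trace `Tr D^(β + s α) (D^(-s/2) Z D^(-s/2))^α` for the diagonal matrix `D` with entries `d`.
It interpolates between the two sides of the weighted Araki–Lieb–Thirring inequality, which are
its values at `s = 1` and `s = 0`. -/
noncomputable def interpTrace (d : m → ℝ) (Z : Matrix m m ℂ) (α β s : ℝ) : ℝ :=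
  ∑ i, d i ^ (β + s * α) * ((diagCongr (fun i => d i ^ (-s / 2)) Z ^ α) i i).re

variable {d : m → ℝ} {Z : Matrix m m ℂ} {α β : ℝ}

theorem interpTrace_add_le (hd : ∀ i, 0 < d i) (hZ : 0 ≤ Z) (hα : α ∈ Set.Ioc (0 : ℝ) 1) {s h : ℝ}
    (hh : 0 ≤ h) (hs : h ≤ β + s * α) : interpTrace d Z α β (s + h) ≤ interpTrace d Z α β s := by
  have hmono : Monovary (fun i => d i ^ (β + s * α - h)) fun i => d i ^ (h / 2) :=
    monovary_rpow (fun i => (hd i).le) (sub_nonneg.2 hs) (div_nonneg hh zero_le_two)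
  have hstep := sum_mul_rpow_le_diagCongr
    (diagCongr_nonneg (fun i => d i ^ (-(s + h) / 2)) hZ) (fun i => Real.rpow_pos_of_pos (hd i) _)
    (fun i => (Real.rpow_pos_of_pos (hd i) _).le) hmono hα
  have hsq (i) : (d i ^ (h / 2)) ^ 2 = d i ^ h := by
    rw [← Real.rpow_mul_natCast (hd i).le]
    congr 1
    push_cast
    ring
  have hcongr : (fun i => d i ^ (h / 2)) * (fun i => d i ^ (-(s + h) / 2)) =
      fun i => d i ^ (-s / 2) := by
    ext i
    rw [Pi.mul_apply, ← Real.rpow_add (hd i)]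
    congr 1
    ring
  rw [diagCongr_diagCongr, hcongr] at hstep
  convert hstep using 1
  · refine Finset.sum_congr rfl fun i _ => ?_
    rw [hsq, smul_rpow (diagCongr_nonneg _ hZ) (Real.rpow_nonneg (hd i).le _), Matrix.smul_apply,
      Complex.smul_re, smul_eq_mul, ← Real.rpow_mul (hd i).le, ← Real.rpow_add (hd i), ← mul_assoc,
      ← Real.rpow_add (hd i)]
    ring_nf
  · refine Finset.sum_congr rfl fun i _ => ?_
    rw [hsq, ← Real.rpow_add (hd i), sub_add_cancel]

theorem interpTrace_one_le_interpTrace_zero (hd : ∀ i, 0 < d i) (hZ : 0 ≤ Z)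
    (hα : α ∈ Set.Ioc (0 : ℝ) 1) (hβ : 0 < β) : interpTrace d Z α β 1 ≤ interpTrace d Z α β 0 := by
  obtain ⟨k, hk⟩ := exists_nat_one_div_lt hβ
  have hanti : Antitone fun l : ℕ => interpTrace d Z α β (l * (1 / (k + 1))) := by
    refine antitone_nat_of_succ_le fun l => ?_
    rw [Nat.cast_succ, add_one_mul]
    refine interpTrace_add_le hd hZ hα (by positivity) (hk.le.trans (le_add_of_nonneg_right ?_))
    have := hα.1.le
    positivity
  have h := hanti (Nat.zero_le (k + 1))
  simp only [Nat.cast_zero, Nat.cast_succ, zero_mul] at h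
  rwa [mul_one_div_cancel (by positivity)] at h

theorem continuous_interpTrace (hd : ∀ i, 0 < d i) (s : ℝ) :
    Continuous fun β => interpTrace d Z α β s := by
  unfold interpTrace
  exact continuous_finsetSum _ fun i _ =>
    ((Real.continuous_const_rpow (hd i).ne').comp (continuous_add_const _)).mul_const _

theorem sum_rpow_mul_rpow_diagCongr_le (hd : ∀ i, 0 < d i) (hZ : 0 ≤ Z)
    (hα : α ∈ Set.Ioc (0 : ℝ) 1) (hβ : 0 ≤ β) :
    ∑ i, d i ^ (β + α) * ((diagCongr (fun i => d i ^ (-1 / 2 : ℝ)) Z ^ α) i i).re ≤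
      ∑ i, d i ^ β * ((Z ^ α) i i).re := by
  have h : interpTrace d Z α β 1 ≤ interpTrace d Z α β 0 := by
    refine le_on_closure (s := Set.Ioi 0)
      (fun b hb => interpTrace_one_le_interpTrace_zero hd hZ hα hb)
      (continuous_interpTrace hd 1).continuousOn (continuous_interpTrace hd 0).continuousOn ?_
    rwa [closure_Ioi]
  have hone : (fun i => d i ^ (-(0 : ℝ) / 2)) = 1 := by
    ext i
    simp
  simpa only [interpTrace, one_mul, zero_mul, add_zero, hone, diagCongr_one] using h

theorem re_trace_diagonal_mul (x : m → ℝ) (Y : Matrix m m ℂ) :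
    (trace (diagonal (fun i => (x i : ℂ)) * Y)).re = ∑ i, x i * (Y i i).re := by
  simp only [trace, diag_apply, diagonal_mul, Complex.re_sum, Complex.re_ofReal_mul]

theorem trace_conjStarAlgAut (U : unitary (Matrix m m ℂ)) (X : Matrix m m ℂ) :
    trace (Unitary.conjStarAlgAut ℂ _ U X) = trace X := by
  rw [Unitary.conjStarAlgAut_apply, trace_mul_cycle, Unitary.coe_star_mul_self, one_mul]

theorem starAlgEquiv_map_rpow (φ : Matrix m m ℂ ≃⋆ₐ[ℂ] Matrix m m ℂ) {X : Matrix m m ℂ}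
    (hX : 0 ≤ X) (x : ℝ) : φ (X ^ x) = φ X ^ x := by
  have hφX : 0 ≤ φ X := map_nonneg φ hX
  rw [CFC.rpow_eq_cfc_real hX, CFC.rpow_eq_cfc_real hφX]
  exact StarAlgHomClass.map_cfc φ _ X (finite_real_spectrum.continuousOn _)
    (LinearMap.continuous_of_finiteDimensional φ.toAlgEquiv.toLinearMap) hX.isSelfAdjoint
    hφX.isSelfAdjoint

theorem rpow_eq_conjStarAlgAut_diagonal {D : Matrix m m ℂ} (hD : D.PosSemidef) (x : ℝ) :
    D ^ x = Unitary.conjStarAlgAut ℂ _ hD.1.eigenvectorUnitary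
      (diagonal fun i => ((hD.1.eigenvalues i ^ x : ℝ) : ℂ)) := by
  rw [CFC.rpow_eq_cfc_real hD.nonneg, hD.1.cfc_eq]
  rfl

theorem re_trace_rpow_mul_rpow_le_s18 {D Z : Matrix m m ℂ} (hD : D.PosDef) (hZ : 0 ≤ Z)
    (hα : α ∈ Set.Ioc (0 : ℝ) 1) (hβ : 0 ≤ β) :
    (trace (D ^ (β + α) * (D ^ (-1 / 2 : ℝ) * Z * D ^ (-1 / 2 : ℝ)) ^ α)).re ≤
      (trace (D ^ β * Z ^ α)).re := by
  set φ := Unitary.conjStarAlgAut ℂ _ hD.1.eigenvectorUnitary with hφ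
  set d := hD.1.eigenvalues
  obtain ⟨Y, rfl⟩ : ∃ Y, φ Y = Z := ⟨φ.symm Z, φ.apply_symm_apply Z⟩
  have hY : 0 ≤ Y := by simpa only [StarAlgEquiv.symm_apply_apply] using map_nonneg φ.symm hZ
  have hpow (x : ℝ) : D ^ x = φ (diagonal fun i => ((d i ^ x : ℝ) : ℂ)) :=
    rpow_eq_conjStarAlgAut_diagonal hD.posSemidef x
  have hcongr : D ^ (-1 / 2 : ℝ) * φ Y * D ^ (-1 / 2 : ℝ) =
      φ (diagCongr (fun i => d i ^ (-1 / 2 : ℝ)) Y) := by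
    rw [hpow, diagCongr, map_mul, map_mul]
  rw [hcongr, hpow, hpow, ← starAlgEquiv_map_rpow φ hY,
    ← starAlgEquiv_map_rpow φ (diagCongr_nonneg _ hY), ← map_mul, ← map_mul, hφ,
    trace_conjStarAlgAut, trace_conjStarAlgAut, re_trace_diagonal_mul, re_trace_diagonal_mul]
  exact sum_rpow_mul_rpow_diagCongr_le hD.eigenvalues_pos hY hα hβ

theorem posDef_rpow {D : Matrix m m ℂ} (hD : D.PosDef) (x : ℝ) : (D ^ x).PosDef :=
  isStrictlyPositive_iff_posDef.1 (.rpow D x hD.isStrictlyPositive)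

theorem posDef_rpow_mul_mul_rpow {D Z : Matrix m m ℂ} (hD : D.PosDef) (hZ : Z.PosDef) (x : ℝ) :
    (D ^ x * Z * D ^ x).PosDef := by
  have h := (IsUnit.posDef_star_right_conjugate_iff (posDef_rpow hD x).isUnit).2 hZ
  rwa [star_eq_conjTranspose, (posDef_rpow hD x).1.eq] at h

theorem rpow_neg_one_eq_inv {X : Matrix m m ℂ} (hX : X.PosDef) : X ^ (-1 : ℝ) = X⁻¹ := by
  rw [← CFC.inverse_eq_rpow_neg_one hX.isStrictlyPositive, nonsing_inv_eq_ringInverse]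

theorem rpow_mul_rpow_neg_one_mul_rpow {D Z : Matrix m m ℂ} (hD : D.PosDef) (hZ : Z.PosDef)
    (x : ℝ) : D ^ x * (D ^ x * Z * D ^ x) ^ (-1 : ℝ) * D ^ x = Z ^ (-1 : ℝ) := by
  have hdet : IsUnit (D ^ x).det := (isUnit_iff_isUnit_det _).1 (posDef_rpow hD x).isUnit
  rw [rpow_neg_one_eq_inv (posDef_rpow_mul_mul_rpow hD hZ x), rpow_neg_one_eq_inv hZ,
    Matrix.mul_inv_rev, Matrix.mul_inv_rev, mul_nonsing_inv_cancel_left _ _ hdet,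
    nonsing_inv_mul_cancel_right _ _ hdet]

theorem le_re_trace_rpow_mul_rpow {D Z : Matrix m m ℂ} (hD : D.PosDef) (hZ : Z.PosDef)
    (hα : α ∈ Set.Ico (-1 : ℝ) 0) (hβ : 0 ≤ β + α) :
    (trace (D ^ β * Z ^ α)).re ≤
      (trace (D ^ (β + α) * (D ^ (-1 / 2 : ℝ) * Z * D ^ (-1 / 2 : ℝ)) ^ α)).re := by
  have hY := posDef_rpow_mul_mul_rpow hD hZ (-1 / 2)
  have h := re_trace_rpow_mul_rpow_le_s18 hD
    (CFC.rpow_nonneg (a := D ^ (-1 / 2 : ℝ) * Z * D ^ (-1 / 2 : ℝ)) (y := -1))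
    ⟨neg_pos.2 hα.2, neg_le.1 hα.1⟩ hβ
  rwa [rpow_mul_rpow_neg_one_mul_rpow hD hZ,
    CFC.rpow_rpow _ _ _ (by norm_num) hZ.isStrictlyPositive,
    CFC.rpow_rpow _ _ _ (by norm_num) hY.isStrictlyPositive, neg_one_mul, neg_neg,
    add_neg_cancel_right] at h

theorem inv_mul_re_trace_mul_rpow_le {A G : Matrix m m ℂ} (hA : A.PosDef) (hG : G.PosDef) {p r : ℝ}
    (hr₀ : r ≠ 0) (hr : r ≤ 1) (hp : |r| ≤ p) :
    r⁻¹ * (trace (A * (A ^ (-(p / 2)) * G ^ (p / r) * A ^ (-(p / 2))) ^ (r / p))).re ≤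
      r⁻¹ * (trace (A ^ (1 - r) * G)).re := by
  have hp₀ : 0 < p := (abs_pos.2 hr₀).trans_le hp
  have hbound := abs_le.1 hp
  have hApow (x : ℝ) : (A ^ p) ^ x = A ^ (p * x) :=
    CFC.rpow_rpow A p x hp₀.ne' hA.isStrictlyPositive
  have hsum : (A ^ p) ^ ((1 - r) / p + r / p) = A := by
    rw [hApow, ← add_div, sub_add_cancel, mul_one_div_cancel hp₀.ne', CFC.rpow_one A]
  have hweight : (A ^ p) ^ ((1 - r) / p) = A ^ (1 - r) := by
    rw [hApow, mul_div_cancel₀ _ hp₀.ne']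
  have hhalf : (A ^ p) ^ (-1 / 2 : ℝ) = A ^ (-(p / 2)) := by
    rw [hApow]
    ring_nf
  have hGpow : (G ^ (p / r)) ^ (r / p) = G := by
    rw [CFC.rpow_rpow G _ _ (div_ne_zero hp₀.ne' hr₀) hG.isStrictlyPositive,
      div_mul_div_cancel₀ hr₀, div_self hp₀.ne', CFC.rpow_one G]
  rcases hr₀.lt_or_gt with hneg | hpos
  · refine mul_le_mul_of_nonpos_left ?_ (inv_nonpos.2 hneg.le)
    have h := le_re_trace_rpow_mul_rpow (posDef_rpow hA p) (posDef_rpow hG (p / r))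
      (α := r / p) (β := (1 - r) / p)
      ⟨(le_div_iff₀ hp₀).2 (by linarith), div_neg_of_neg_of_pos hneg hp₀⟩
      (by rw [← add_div, sub_add_cancel]; positivity)
    rwa [hsum, hweight, hhalf, hGpow] at h
  · refine mul_le_mul_of_nonneg_left ?_ (inv_nonneg.2 hpos.le)
    have h := re_trace_rpow_mul_rpow_le_s18 (posDef_rpow hA p) (CFC.rpow_nonneg (a := G) (y := p / r))
      (α := r / p) (β := (1 - r) / p) ⟨div_pos hpos hp₀, (div_le_one hp₀).2 hbound.2⟩
      (div_nonneg (sub_nonneg.2 hr) hp₀.le)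
    rwa [hsum, hweight, hhalf, hGpow] at h

end Matrix

section trRe

variable {n : ℕ} (X Y : Matrix (Fin n) (Fin n) ℂ)

theorem trRe_add_s18 : trRe (X + Y) = trRe X + trRe Y := by
  rw [trRe, trace_add, Complex.add_re, trRe, trRe]

theorem trRe_sub_s18 : trRe (X - Y) = trRe X - trRe Y := by
  rw [trRe, trace_sub, Complex.sub_re, trRe, trRe]

theorem trRe_smul_s18 (c : ℝ) : trRe (c • X) = c * trRe X := by
  rw [trRe, trace_smul, Complex.smul_re, smul_eq_mul, trRe]

theorem trRe_mul_comm_s18 : trRe (X * Y) = trRe (Y * X) := by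
  rw [trRe, trace_mul_comm, trRe]

end trRe

section Tsallis

open scoped MatrixOrder Matrix.Norms.L2Operator

variable {n : ℕ} {A B : Matrix (Fin n) (Fin n) ℂ}

theorem mpow_eq_rpow (hA : 0 ≤ A) (x : ℝ) : mpow A x = A ^ x :=
  (CFC.rpow_eq_cfc_real hA).symm

theorem mlogq_eq_smul_rpow_sub_one (hA : 0 ≤ A) (q : ℝ) :
    mlogq q A = (q - 1)⁻¹ • (A ^ (q - 1) - 1) := by
  have hcont (f : ℝ → ℝ) : ContinuousOn f (spectrum ℝ A) := finite_real_spectrum.continuousOn f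
  have hlogq : logq q = fun x => (q - 1)⁻¹ • (x ^ (q - 1) - 1) :=
    funext fun x => div_eq_inv_mul _ _
  rw [mlogq, hlogq, cfc_smul _ _ A (hcont _), cfc_sub _ _ A (hcont _) (hcont _),
    CFC.rpow_eq_cfc_real hA, cfc_const_one ℝ A]

theorem STq_sub_add_eq (hA : A.PosDef) (hB : 0 ≤ B) (H : Matrix (Fin n) (Fin n) ℂ) (q : ℝ) :
    STq H q A B - (1 / (q - 1)) * trRe ((H * Hᴴ - 1) * mpow A (2 - q)) + trRe (A - B) =
      (q - 1)⁻¹ * (trRe A - trRe (mpow A (2 - q) * (H * mpow B (q - 1) * Hᴴ))) := by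
  have hcyc (X : Matrix (Fin n) (Fin n) ℂ) :
      trRe (Hᴴ * A ^ (2 - q) * H * X) = trRe (A ^ (2 - q) * (H * X * Hᴴ)) := by
    rw [mul_assoc, mul_assoc, trRe_mul_comm_s18]
    simp only [mul_assoc]
  have hone := hcyc 1
  rw [mul_one, mul_one] at hone
  have hmul : A ^ (2 - q) * A ^ (q - 1) = A := by
    rw [← CFC.rpow_add hA.isUnit, sub_add_sub_cancel, show (2 : ℝ) - 1 = 1 by norm_num,
      CFC.rpow_one A]
  have hA₀ : 0 ≤ A := hA.posSemidef.nonneg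
  rw [STq, mlogq_eq_smul_rpow_sub_one hA₀, mlogq_eq_smul_rpow_sub_one hB, mpow_eq_rpow hA₀,
    mpow_eq_rpow hB]
  simp only [mul_smul_comm, mul_sub, sub_mul, mul_one, one_mul, trRe_add_s18, trRe_sub_s18, trRe_smul_s18]
  rw [hmul, hcyc, hone, trRe_mul_comm_s18 (H * Hᴴ)]
  ring

theorem neg_trRe_mul_mlogq_mpow {Y : Matrix (Fin n) (Fin n) ℂ} (hY : Y.PosDef)
    (A : Matrix (Fin n) (Fin n) ℂ) {p : ℝ} (hp : p ≠ 0) (q : ℝ) :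
    -trRe (A * mlogq q (mpow Y (1 / p))) =
      (q - 1)⁻¹ * (trRe A - trRe (A * Y ^ ((q - 1) / p))) := by
  rw [mpow_eq_rpow hY.posSemidef.nonneg, mlogq_eq_smul_rpow_sub_one CFC.rpow_nonneg,
    CFC.rpow_rpow Y _ _ (one_div_ne_zero hp) hY.isStrictlyPositive, one_div_mul_eq_div]
  simp only [mul_smul_comm, mul_sub, mul_one, trRe_sub_s18, trRe_smul_s18]
  ring

end Tsallis

theorem stmt18_general {n : ℕ} (A B H : Matrix (Fin n) (Fin n) ℂ)
    (hA : A.PosDef) (hB : B.PosDef) (hHinv : IsUnit H)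
    (q : ℝ) (hq : q ≤ 2) (hq1 : q ≠ 1) (p : ℝ) (hp : |q - 1| ≤ p) :
    STq H q A B - (1 / (q - 1)) * trRe ((H * Hᴴ - 1) * mpow A (2 - q)) + trRe (A - B)
      ≤ - trRe (A * mlogq q
          (mpow (mpow A (-(p / 2)) * mpow (H * mpow B (q - 1) * Hᴴ) (p / (q - 1))
                  * mpow A (-(p / 2))) (1 / p))) := by
  have hr : q - 1 ≠ 0 := sub_ne_zero.2 hq1
  have hp₀ : p ≠ 0 := ((abs_pos.2 hr).trans_le hp).ne'
  have hG : (H * mpow B (q - 1) * Hᴴ).PosDef := by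
    rw [mpow_eq_rpow hB.posSemidef.nonneg]
    exact (IsUnit.posDef_star_right_conjugate_iff hHinv).2 (posDef_rpow hB _)
  rw [STq_sub_add_eq hA hB.posSemidef.nonneg, mpow_eq_rpow hG.posSemidef.nonneg,
    mpow_eq_rpow hA.posSemidef.nonneg, mpow_eq_rpow hA.posSemidef.nonneg,
    neg_trRe_mul_mlogq_mpow (posDef_rpow_mul_mul_rpow hA (posDef_rpow hG _) _) A hp₀ q,
    mul_sub, mul_sub, show 2 - q = 1 - (q - 1) by ring]
  exact sub_le_sub_left (inv_mul_re_trace_mul_rpow_le hA hG hr (by linarith) hp) _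

/-- Upper bound for the reduced Tsallis relative entropy. -/
theorem stmt18 {n : ℕ} (A B H : Matrix (Fin n) (Fin n) ℂ)
    (hA : A.PosDef) (hB : B.PosDef) (hH : (1 - Hᴴ * H).PosSemidef) (hHinv : IsUnit H)
    (q : ℝ) (hq : q ∈ Set.Icc (0 : ℝ) 2) (hq1 : q ≠ 1) (p : ℝ) (hp : |q - 1| ≤ p) :
    STq H q A B - (1 / (q - 1)) * trRe ((H * Hᴴ - 1) * mpow A (2 - q)) + trRe (A - B)
      ≤ - trRe (A * mlogq q
          (mpow (mpow A (-(p / 2)) * mpow (H * mpow B (q - 1) * Hᴴ) (p / (q - 1))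
                  * mpow A (-(p / 2))) (1 / p))) :=
  stmt18_general A B H hA hB hHinv q hq.2 hq1 p hp
end
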